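/- arXiv:2411.18422 — 4 statements merged into one kernel-verified Lean document; each statement's English description precedes it below -/
import Mathlib

section
/- Assume S(c) ≠ ∅ for every c ∈ ℝ^m, and assume the following uniform growth property along approximating sequences: for every c* ∈ ℝ^m there is a strictly increasing ψ : [0,∞) → [0,∞) with ψ(0) = 0 such that for every sequence c^k → c* in ℝ^m, every x* ∈ S(c*) and every k, one has max_{i=1,…,m}(f_i(x*) − c^k_i) − inf_{z ∈ H} max_{i=1,…,m}(f_i(z) − c^k_i) ≥ ψ(dist(x*, S(c^k))), where dist(x,A) := inf_{y ∈ A} ‖x − y‖. Then for every c* ∈ ℝ^m and every sequence c^k → c*, the sets S(c^k) Mosco-converge to S(c*), that is: (i) for every x* ∈ S(c*) there exists a sequence (x^k) with x^k ∈ S(c^k) for all k and ‖x^k − x*‖ → 0; and (ii) for every subsequence (k_l) and every choice x^{k_l} ∈ S(c^{k_l}) that converges weakly to some x̄ ∈ H, one has x̄ ∈ S(c*). -/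
/-!
Write `G(z, c) = max_i (f_i(z) - c_i)`. The map `G(z, ·)` is 1-Lipschitz for the sup norm, uniformly
in `z` (`iSup_sub_le_add_norm`).

Strong approximation: for `x* ∈ S(c*)` the optimality gap of `x*` for `G(·, c^k)` is therefore
at most `2 ‖c^k - c*‖`, so by the growth inequality `ψ(dist(x*, S(c^k))) → 0`; since `ψ` is
strictly increasing and vanishes at `0`, the distances tend to `0`, and near-nearest points of
`S(c^k)` converge to `x*`.

Weak limits: for `y^l ∈ S(c^{k_l})` and any `z`, `G(y^l, c*) ≤ G(z, c*) + 2 ‖c^{k_l} - c*‖`. Each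
`f_i` lies above its tangent at `x̄` (`gradient_inequality`), and the linear term
`⟨y^l - x̄, ∇f_i(x̄)⟩` vanishes along a weakly convergent sequence, whence
`f_i(x̄) - c*_i ≤ G(z, c*)` for every `i` in the limit.
-/

open Filter Topology
open scoped NNReal InnerProductSpace

lemma iSup_sub_le_add_norm {m : ℕ} (hm : 0 < m) (a c d : Fin m → ℝ) :
    (⨆ i, (a i - c i)) ≤ (⨆ i, (a i - d i)) + ‖c - d‖ := by
  have : Nonempty (Fin m) := ⟨⟨0, hm⟩⟩
  refine ciSup_le fun i => ?_
  have h1 := le_ciSup (Set.finite_range fun i => a i - d i).bddAbove i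
  have h2 := norm_le_pi_norm (c - d) i
  have h3 := neg_le_abs ((c - d) i)
  simp only [Pi.sub_apply, Real.norm_eq_abs] at h1 h2 h3
  linarith

lemma gradient_inequality {H : Type*} [NormedAddCommGroup H] [InnerProductSpace ℝ H]
    [CompleteSpace H] {g : H → ℝ} (hg : ConvexOn ℝ Set.univ g) {x : H}
    (hd : DifferentiableAt ℝ g x) (y : H) :
    g x + ⟪y - x, gradient g x⟫_ℝ ≤ g y := by
  -- The one-variable slope inequality, applied to `t ↦ g (x + t (y - x))` on `[0, 1]`.
  have hc : ConvexOn ℝ Set.univ (g ∘ AffineMap.lineMap (k := ℝ) x y) :=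
    hg.comp_affineMap (AffineMap.lineMap x y)
  have hline : HasDerivAt (AffineMap.lineMap (k := ℝ) x y) (y - x) (0 : ℝ) :=
    AffineMap.hasDerivAt_lineMap
  have hd' : HasFDerivAt g (fderiv ℝ g x) (AffineMap.lineMap (k := ℝ) x y (0 : ℝ)) := by
    simpa using hd.hasFDerivAt
  have h := hc.le_slope_of_hasDerivAt (Set.mem_univ 0) (Set.mem_univ 1) one_pos
    (hd'.comp_hasDerivAt (0 : ℝ) hline)
  rw [inner_gradient_right]
  simp only [slope_def_field, Function.comp_apply, AffineMap.lineMap_apply_one,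
    AffineMap.lineMap_apply_zero, sub_zero, div_one] at h
  rw [conj_trivial]
  linarith

/-- Under the uniform growth property along approximating sequences, for every
`c* ∈ ℝ^m` and every sequence `c^k → c*`, the sets `S(c^k)` Mosco-converge to `S(c*)`:
(i) every `x* ∈ S(c*)` is the strong limit of a sequence `x^k ∈ S(c^k)`; (ii) every weak limit
of choices `x^{k_l} ∈ S(c^{k_l})` along a subsequence belongs to `S(c*)`. -/
theorem stmt_4
    {H : Type*} [NormedAddCommGroup H] [InnerProductSpace ℝ H] [CompleteSpace H]
    {m : ℕ} (hm : 0 < m) (f : Fin m → H → ℝ)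
    (hconv : ∀ i, ConvexOn ℝ Set.univ (f i))
    (hdiff : ∀ i, Differentiable ℝ (f i))
    (hlip : ∀ i, ∃ L : ℝ≥0, LipschitzWith L (gradient (f i)))
    (S : (Fin m → ℝ) → Set H)
    (hSdef : ∀ c : Fin m → ℝ,
      S c = {z : H | ∀ y : H, (⨆ i, (f i z - c i)) ≤ ⨆ i, (f i y - c i)})
    (hS : ∀ c : Fin m → ℝ, (S c).Nonempty)
    (hgrowth : ∀ cstar : Fin m → ℝ, ∃ ψ : ℝ → ℝ,
      StrictMonoOn ψ (Set.Ici 0) ∧ ψ 0 = 0 ∧ (∀ s ∈ Set.Ici (0:ℝ), 0 ≤ ψ s) ∧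
      ∀ c : ℕ → Fin m → ℝ, Tendsto c atTop (𝓝 cstar) →
        ∀ xstar ∈ S cstar, ∀ k : ℕ,
          ψ (Metric.infDist xstar (S (c k))) ≤
            (⨆ i, (f i xstar - c k i)) - ⨅ z : H, ⨆ i, (f i z - c k i)) :
    ∀ cstar : Fin m → ℝ, ∀ c : ℕ → Fin m → ℝ, Tendsto c atTop (𝓝 cstar) →
      (∀ xstar ∈ S cstar, ∃ x : ℕ → H, (∀ k, x k ∈ S (c k)) ∧
        Tendsto (fun k => ‖x k - xstar‖) atTop (𝓝 0)) ∧
      (∀ k : ℕ → ℕ, StrictMono k → ∀ xbar : H, ∀ y : ℕ → H,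
        (∀ l, y l ∈ S (c (k l))) →
        (∀ w : H, Tendsto (fun l => ⟪y l, w⟫_ℝ) atTop (𝓝 ⟪xbar, w⟫_ℝ)) →
        xbar ∈ S cstar) := by
  intro cstar c hc
  have : Nonempty (Fin m) := ⟨⟨0, hm⟩⟩
  have hδ : Tendsto (fun k => ‖c k - cstar‖) atTop (𝓝 0) :=
    tendsto_iff_norm_sub_tendsto_zero.mp hc
  have hmin : ∀ (e : Fin m → ℝ) (z : H), z ∈ S e →
      ∀ y : H, (⨆ i, (f i z - e i)) ≤ ⨆ i, (f i y - e i) := fun e z hz => by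
    rw [hSdef e] at hz
    exact hz
  constructor
  · intro xstar hx
    obtain ⟨ψ, hψ, hψ0, -, hgr⟩ := hgrowth cstar
    have hψle : ∀ k, ψ (Metric.infDist xstar (S (c k))) ≤ 2 * ‖c k - cstar‖ := fun k => by
      have h1 := hgr c hc xstar hx k
      have h2 : (⨆ i, (f i xstar - cstar i)) - ‖c k - cstar‖ ≤
          ⨅ z : H, ⨆ i, (f i z - c k i) := by
        refine le_ciInf fun z => ?_
        have h3 := hmin cstar xstar hx z
        have h4 := iSup_sub_le_add_norm hm (fun i => f i z) cstar (c k)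
        rw [norm_sub_rev] at h4
        linarith
      have h5 := iSup_sub_le_add_norm hm (fun i => f i xstar) (c k) cstar
      linarith
    have hdist : Tendsto (fun k => Metric.infDist xstar (S (c k))) atTop (𝓝 0) := by
      refine tendsto_order.2 ⟨fun a ha => Eventually.of_forall fun k =>
        ha.trans_le Metric.infDist_nonneg, fun ε hε => ?_⟩
      have hpos : 0 < ψ ε := by
        rw [← hψ0]
        exact hψ (Set.mem_Ici.2 le_rfl) (Set.mem_Ici.2 hε.le) hε
      filter_upwards [hδ.eventually_lt_const (half_pos hpos)] with k hk
      refine (hψ.lt_iff_lt (Set.mem_Ici.2 Metric.infDist_nonneg) (Set.mem_Ici.2 hε.le)).1 ?_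
      linarith [hψle k]
    have hex : ∀ k : ℕ, ∃ y ∈ S (c k),
        dist xstar y < Metric.infDist xstar (S (c k)) + 1 / ((k : ℝ) + 1) := fun k =>
      (Metric.infDist_lt_iff (hS (c k))).1 (lt_add_of_pos_right _ Nat.one_div_pos_of_nat)
    choose x hxS hxd using hex
    refine ⟨x, hxS, squeeze_zero (fun k => norm_nonneg _) (fun k => ?_)
      (by simpa using hdist.add tendsto_one_div_add_atTop_nhds_zero_nat)⟩
    rw [← dist_eq_norm, dist_comm]
    simpa using (hxd k).le
  · intro k hk xbar y hy hw
    rw [hSdef cstar]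
    intro z
    refine ciSup_le fun i => ?_
    have hlin : Tendsto (fun l => ⟪y l - xbar, gradient (f i) xbar⟫_ℝ) atTop (𝓝 0) := by
      simpa [inner_sub_left] using (hw (gradient (f i) xbar)).sub_const ⟪xbar, gradient (f i) xbar⟫_ℝ
    have hlim : Tendsto (fun l => (⨆ i, (f i z - cstar i)) + 2 * ‖c (k l) - cstar‖
        - ⟪y l - xbar, gradient (f i) xbar⟫_ℝ) atTop (𝓝 (⨆ i, (f i z - cstar i))) := by
      simpa using (((hδ.comp hk.tendsto_atTop).const_mul 2).const_add
        (⨆ i, (f i z - cstar i))).sub hlin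
    refine ge_of_tendsto' hlim fun l => ?_
    have h1 := gradient_inequality (hconv i) (hdiff i xbar) (y l)
    have h2 := le_ciSup (Set.finite_range fun j => f j (y l) - cstar j).bddAbove i
    have h3 := iSup_sub_le_add_norm hm (fun j => f j (y l)) cstar (c (k l))
    have h4 := hmin _ _ (hy l) z
    have h5 := iSup_sub_le_add_norm hm (fun j => f j z) (c (k l)) cstar
    rw [norm_sub_rev] at h3
    linarith
end

section
/- Let x be a trajectory solution of (MTRIGS), λ > 0, r ∈ [q,1] and z ∈ H. With f_{t,i}(u) := f_i(u) + (β/(2t^p))‖u‖², define E : [t₀,∞) → ℝ by E(t) := t^{2r}·min_{i=1,…,m}(f_{t,i}(x(t)) − f_{t,i}(z)) + (1/2)‖λ(x(t) − z) + t^r ẋ(t)‖² + (λ/2)(r t^{r−1} + α t^{r−q} − 2λ)‖x(t) − z‖². Then E is absolutely continuous on every compact interval [t₀,T], differentiable almost everywhere on [t₀,∞), and for almost every t ≥ t₀: E'(t) ≤ (2r t^{2r−1} − λ t^r)·min_{i=1,…,m}(f_{t,i}(x(t)) − f_{t,i}(z)) + (pβ t^{2r}/(2t^{p+1}))‖z‖²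 + λ(2r t^{r−1} − λ)·⟨x(t) − z, ẋ(t)⟩ + t^r(λ + r t^{r−1} − α t^{r−q})‖ẋ(t)‖² + (λ/2)(r(r−1)t^{r−2} + α(r−q)t^{r−q−1} − β t^{r−p})‖x(t) − z‖². -/
/-! The minimal-norm condition in (MTRIGS) forces `ẍ = -(α/t^q)ẋ - g - (β/t^p)x` for some `g` in the
convex hull of the gradients, so `ẍ` is essentially bounded on compact intervals and `ẋ` is Lipschitz
there (`LipOn.velocity`); this also supplies the integrability of `ẍ`. Hence the energy is built
from functions that are Lipschitz on compact intervals. It is thus Lipschitz, in particular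
absolutely continuous, and the minimum `h(t) = min_i (f_{t,i}(x(t)) - f_{t,i}(z))`, being Lipschitz
too, is differentiable almost everywhere.

At a point of differentiability the derivative of `h` agrees with that of any active component
(`deriv_iInf_eq`), which is `⟪∇f_i(x) + (β/t^p)x, ẋ⟫ - pβ/(2t^{p+1}) (‖x‖² - ‖z‖²)`. Two inequalities
then give the estimate:
* the variational characterisation of the minimal-norm element `-(α/t^q)ẋ` of `K(t)` yields
  `⟪∇f_i(x) + (β/t^p)x + ẍ, ẋ⟫ ≤ -(α/t^q)‖ẋ‖²` for every `i` (`inner_add_le_of_minimal`), which bounds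
  `h' + ⟪ẋ, ẍ⟫`;
* strong convexity of `f_{t,i}` and the equation for `ẍ` yield
  `⟪x - z, ẍ⟫ ≤ -(α/t^q)⟪x - z, ẋ⟫ - h - (β/(2t^p))‖x - z‖²` (`inner_accel_le`).
Differentiating the energy and inserting these, the terms in `ẍ` disappear and the claimed
bound remains. -/


open Filter Topology MeasureTheory
open scoped NNReal InnerProductSpace

/-- A real function is absolutely continuous on the interval `[a, b]`. -/
def AbsContOn (h : ℝ → ℝ) (a b : ℝ) : Prop :=
  ∀ ε : ℝ, 0 < ε → ∃ δ : ℝ, 0 < δ ∧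
    ∀ n : ℕ, ∀ c d : Fin n → ℝ,
      (∀ k, a ≤ c k ∧ c k ≤ d k ∧ d k ≤ b) →
      (∀ k l, k ≠ l → Set.Ioo (c k) (d k) ∩ Set.Ioo (c l) (d l) = ∅) →
      (∑ k, (d k - c k)) < δ →
      (∑ k, |h (d k) - h (c k)|) < ε

/-! ### Functions that are Lipschitz on a compact interval -/

/-- `g` is Lipschitz on the compact interval `[a, b]`, with an unspecified real constant. -/
def LipOn {V : Type*} [NormedAddCommGroup V] (g : ℝ → V) (a b : ℝ) : Prop :=
  ∃ K : ℝ, 0 ≤ K ∧ ∀ s ∈ Set.Icc a b, ∀ t ∈ Set.Icc a b, ‖g t - g s‖ ≤ K * |t - s|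

namespace LipOn

variable {V : Type*} [NormedAddCommGroup V] {a b : ℝ}

lemma bounded {g : ℝ → V} (hg : LipOn g a b) : ∃ B : ℝ, 0 ≤ B ∧ ∀ t ∈ Set.Icc a b, ‖g t‖ ≤ B := by
  obtain ⟨K, hK, h⟩ := hg
  refine ⟨‖g a‖ + K * |b - a|, by positivity, fun t ht => ?_⟩
  have h1 := h a ⟨le_rfl, ht.1.trans ht.2⟩ t ht
  have h2 : |t - a| ≤ |b - a| := by
    rw [abs_of_nonneg (by linarith [ht.1]), abs_of_nonneg (by linarith [ht.1, ht.2])]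
    linarith [ht.2]
  have h3 : ‖g t‖ ≤ ‖g a‖ + ‖g t - g a‖ := by
    simpa using norm_add_le (g a) (g t - g a)
  nlinarith

lemma const (c : V) : LipOn (fun _ => c) a b :=
  ⟨0, le_rfl, fun s _ t _ => by simp⟩

lemma add {g k : ℝ → V} (hg : LipOn g a b) (hk : LipOn k a b) :
    LipOn (fun t => g t + k t) a b := by
  obtain ⟨K, hK, h⟩ := hg
  obtain ⟨L, hL, h'⟩ := hk
  refine ⟨K + L, by positivity, fun s hs t ht => ?_⟩
  have : g t + k t - (g s + k s) = (g t - g s) + (k t - k s) := by abel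
  rw [this]
  linarith [norm_add_le (g t - g s) (k t - k s), h s hs t ht, h' s hs t ht]

lemma smul [NormedSpace ℝ V] {c : ℝ → ℝ} {g : ℝ → V} (hc : LipOn c a b) (hg : LipOn g a b) :
    LipOn (fun t => c t • g t) a b := by
  obtain ⟨B, hB, hgB⟩ := hg.bounded
  obtain ⟨C, hC, hcC⟩ := hc.bounded
  obtain ⟨K, hK, h⟩ := hc
  obtain ⟨L, hL, h'⟩ := hg
  refine ⟨C * L + K * B, by positivity, fun s hs t ht => ?_⟩
  have : c t • g t - c s • g s = c t • (g t - g s) + (c t - c s) • g s := by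
    rw [smul_sub, sub_smul]; abel
  rw [this]
  refine (norm_add_le _ _).trans ?_
  rw [norm_smul, norm_smul, add_mul]
  refine add_le_add ?_ ?_
  · rw [mul_assoc]
    exact mul_le_mul (hcC t ht) (h' s hs t ht) (norm_nonneg _) hC
  · rw [mul_right_comm]
    exact mul_le_mul (h s hs t ht) (hgB s hs) (norm_nonneg _) (by positivity)

lemma mul {c g : ℝ → ℝ} (hc : LipOn c a b) (hg : LipOn g a b) :
    LipOn (fun t => c t * g t) a b := hc.smul hg

lemma norm_sq {g : ℝ → V} (hg : LipOn g a b) : LipOn (fun t => ‖g t‖ ^ 2) a b := by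
  have h1 : LipOn (fun t => ‖g t‖) a b := by
    obtain ⟨K, hK, h⟩ := hg
    exact ⟨K, hK, fun s hs t ht => (abs_norm_sub_norm_le _ _).trans (h s hs t ht)⟩
  simpa only [pow_two] using h1.mul h1

lemma iInf {ι : Type*} [Finite ι] [Nonempty ι] {φ : ι → ℝ → ℝ} (h : ∀ i, LipOn (φ i) a b) :
    LipOn (fun t => ⨅ i, φ i t) a b := by
  classical
  have := Fintype.ofFinite ι
  choose K hK hφ using h
  have key : ∀ s ∈ Set.Icc a b, ∀ t ∈ Set.Icc a b,
      (⨅ i, φ i t) - (⨅ i, φ i s) ≤ (∑ i, K i) * |t - s| := by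
    intro s hs t ht
    obtain ⟨i, hi⟩ := exists_eq_ciInf_of_finite (f := fun i => φ i s)
    have h1 : (⨅ i, φ i t) ≤ φ i t := ciInf_le (Set.finite_range _).bddBelow i
    have h2 := (le_abs_self _).trans (hφ i s hs t ht)
    have h3 : K i ≤ ∑ i, K i := Finset.single_le_sum (fun j _ => hK j) (Finset.mem_univ i)
    have h4 := mul_le_mul_of_nonneg_right h3 (abs_nonneg (t - s))
    linarith
  refine ⟨∑ i, K i, Finset.sum_nonneg fun i _ => hK i, fun s hs t ht => ?_⟩
  rw [Real.norm_eq_abs, abs_le]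
  have h1 := key s hs t ht
  have h2 := key t ht s hs
  rw [abs_sub_comm] at h2
  constructor <;> linarith

lemma of_hasDerivAt [NormedSpace ℝ V] {g g' : ℝ → V} (hg : ∀ t ∈ Set.Icc a b, HasDerivAt g (g' t) t)
    (hg' : ContinuousOn g' (Set.Icc a b)) : LipOn g a b := by
  obtain ⟨C, hC⟩ := isCompact_Icc.exists_bound_of_continuousOn hg'
  refine ⟨max C 0, le_max_right _ _, fun s hs t ht => ?_⟩
  exact (convex_Icc a b).norm_image_sub_le_of_norm_hasDerivWithin_le
    (fun u hu => (hg u hu).hasDerivWithinAt) (fun u hu => (hC u hu).trans (le_max_left _ _)) hs ht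

lemma rpow (ha : 0 < a) (c : ℝ) : LipOn (fun t => t ^ c) a b := by
  refine of_hasDerivAt (g' := fun t => c * t ^ (c - 1))
    (fun t ht => Real.hasDerivAt_rpow_const (Or.inl (ha.trans_le ht.1).ne')) ?_
  exact fun t ht => ((Real.continuousAt_rpow_const t _
    (Or.inl (ha.trans_le ht.1).ne')).const_mul c).continuousWithinAt

lemma absContOn {g : ℝ → ℝ} (hg : LipOn g a b) : AbsContOn g a b := by
  obtain ⟨K, hK, h⟩ := hg
  intro ε hε
  refine ⟨ε / (K + 1), by positivity, fun n c d hcd _ hsum => ?_⟩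
  have h1 : ∑ k, |g (d k) - g (c k)| ≤ K * ∑ k, (d k - c k) := by
    rw [Finset.mul_sum]
    refine Finset.sum_le_sum fun k _ => ?_
    obtain ⟨h1, h2, h3⟩ := hcd k
    have := h (c k) ⟨h1, h2.trans h3⟩ (d k) ⟨h1.trans h2, h3⟩
    rwa [abs_of_nonneg (sub_nonneg.2 h2)] at this
  have h0 : 0 ≤ ∑ k, (d k - c k) := Finset.sum_nonneg fun k _ => by linarith [(hcd k).2.1]
  rw [lt_div_iff₀ (by positivity)] at hsum
  nlinarith

/-- One-dimensional Rademacher theorem on a half-line; the endpoint is discarded as a null set. -/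
lemma ae_differentiableAt {g : ℝ → ℝ} (h : ∀ T ∈ Set.Ici a, LipOn g a T) :
    ∀ᵐ t ∂(volume.restrict (Set.Ici a)), DifferentiableAt ℝ g t := by
  rw [ae_restrict_iff' measurableSet_Ici]
  have h1 : ∀ n : ℕ, ∀ᵐ t : ℝ, t ∈ Set.Icc a (a + n) →
      DifferentiableWithinAt ℝ g (Set.Icc a (a + n)) t := by
    intro n
    obtain ⟨K, hK, hL⟩ := h (a + n) (by simp)
    refine LipschitzOnWith.ae_differentiableWithinAt_of_mem_real (C := K.toNNReal) ?_
    refine LipschitzOnWith.of_dist_le_mul fun t ht s hs => ?_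
    rw [dist_eq_norm, Real.dist_eq, Real.coe_toNNReal _ hK]
    exact hL s hs t ht
  filter_upwards [ae_all_iff.2 h1, Measure.ae_ne volume a] with t ht hne hta
  obtain ⟨n, hn⟩ := exists_nat_gt (t - a)
  have hat : a < t := lt_of_le_of_ne hta (Ne.symm hne)
  exact (ht n ⟨hta, by linarith⟩).differentiableAt (Icc_mem_nhds hat (by linarith))

/-- An essentially bounded acceleration makes the velocity Lipschitz; the bound also makes the
Bochner integral in the hypothesis a genuine one. -/
lemma velocity [NormedSpace ℝ V] {v w : ℝ → V} {C : ℝ} (hC : 0 ≤ C) (hw : StronglyMeasurable w)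
    (hint : ∀ t ∈ Set.Icc a b, v t = v a + ∫ s in a..t, w s)
    (hb : ∀ᵐ t, t ∈ Set.Icc a b → ‖w t‖ ≤ C) : LipOn v a b := by
  have hI : ∀ t ∈ Set.Icc a b, IntervalIntegrable w volume a t := by
    intro t ht
    rw [intervalIntegrable_iff_integrableOn_Ioc_of_le ht.1]
    refine Measure.integrableOn_of_bounded (M := C) (by simp) hw.aestronglyMeasurable ?_
    rw [ae_restrict_iff' measurableSet_Ioc]
    filter_upwards [hb] with s hs hst
    exact hs ⟨hst.1.le, hst.2.trans ht.2⟩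
  refine ⟨C, hC, fun s hs t ht => ?_⟩
  rw [hint t ht, hint s hs, add_sub_add_left_eq_sub,
    intervalIntegral.integral_interval_sub_left (hI t ht) (hI s hs)]
  refine intervalIntegral.norm_integral_le_of_norm_le_const_ae ?_
  filter_upwards [hb] with u hu hus
  rw [Set.uIoc, Set.mem_Ioc] at hus
  exact hu ⟨(le_min hs.1 ht.1).trans hus.1.le, hus.2.trans (max_le hs.2 ht.2)⟩

end LipOn

/-! ### Derivative of a finite minimum -/

/-- Envelope principle: where a finite minimum is differentiable, its derivative is that of any
active component, since the difference of the two has a local maximum there. -/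
lemma deriv_iInf_eq {ι : Type*} [Finite ι] {φ : ι → ℝ → ℝ} {t d e : ℝ} {i : ι}
    (hi : φ i t = ⨅ j, φ j t) (hd : HasDerivAt (fun s => ⨅ j, φ j s) d t)
    (he : HasDerivAt (φ i) e t) : d = e := by
  have hmax : IsLocalMax (fun s => (⨅ j, φ j s) - φ i s) t := by
    refine Eventually.of_forall fun s => ?_
    have : (⨅ j, φ j s) ≤ φ i s := ciInf_le (Set.finite_range _).bddBelow i
    simp only
    linarith
  have := hmax.hasDerivAt_eq_zero (hd.sub he)
  linarith

/-! ### Minimal-norm elements, convexity and the gradient -/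

section Inner

variable {H : Type*} [NormedAddCommGroup H] [InnerProductSpace ℝ H]

/-- Variational inequality for a minimal-norm element `-c v` of a convex set. -/
lemma inner_add_le_of_minimal {K : Set H} (hK : Convex ℝ K) {c : ℝ} (hc : 0 < c) {v : H}
    (hv : (-c) • v ∈ K) (hmin : ∀ w ∈ K, ‖c • v‖ ≤ ‖w‖) {w : H} (hw : w ∈ K) :
    ⟪w, v⟫_ℝ ≤ -c * ‖v‖ ^ 2 := by
  have hne : Nonempty K := ⟨⟨_, hv⟩⟩
  have h1 : ‖(0 : H) - (-c) • v‖ = ⨅ w : K, ‖(0 : H) - w‖ := by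
    apply le_antisymm
    · refine le_ciInf fun w => ?_
      simpa using hmin w w.2
    · exact ciInf_le (f := fun w : K => ‖(0 : H) - w‖)
        ⟨0, by rintro _ ⟨w, rfl⟩; exact norm_nonneg _⟩ ⟨_, hv⟩
  have h2 := (norm_eq_iInf_iff_real_inner_le_zero hK hv).1 h1 w hw
  have h3 : ⟪(0 : H) - (-c) • v, w - (-c) • v⟫_ℝ = c * (⟪w, v⟫_ℝ + c * ‖v‖ ^ 2) := by
    rw [neg_smul, sub_neg_eq_add, sub_neg_eq_add, zero_add, real_inner_smul_left, inner_add_right,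
      real_inner_smul_right, real_inner_self_eq_norm_sq, real_inner_comm]
  rw [h3] at h2
  nlinarith [nonpos_of_mul_nonpos_right h2 hc]

variable [CompleteSpace H]

lemma hasDerivAt_comp_gradient {f : H → ℝ} (hf : Differentiable ℝ f) {y : ℝ → H} {y' : H} {t : ℝ}
    (hy : HasDerivAt y y' t) : HasDerivAt (fun s => f (y s)) ⟪gradient f (y t), y'⟫_ℝ t := by
  rw [show ⟪gradient f (y t), y'⟫_ℝ = fderiv ℝ f (y t) y' by simp]
  exact (hf (y t)).hasFDerivAt.comp_hasDerivAt t hy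

/-- First-order convexity inequality, obtained by restricting `f` to the line through `z` and `y`. -/
lemma gradient_ineq {f : H → ℝ} (hc : ConvexOn ℝ Set.univ f) (hf : Differentiable ℝ f) (y z : H) :
    f y - f z ≤ ⟪gradient f y, y - z⟫_ℝ := by
  have h1 : ConvexOn ℝ Set.univ (f ∘ (AffineMap.lineMap z y : ℝ →ᵃ[ℝ] H)) := by
    simpa using hc.comp_affineMap (AffineMap.lineMap z y : ℝ →ᵃ[ℝ] H)
  have h2 : HasDerivAt (fun s : ℝ => f (AffineMap.lineMap z y s)) ⟪gradient f y, y - z⟫_ℝ 1 := by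
    have := hasDerivAt_comp_gradient hf 
      (AffineMap.hasDerivAt_lineMap (a := z) (b := y) (x := (1 : ℝ)))
    simpa using this
  have h3 := h1.slope_le_of_hasDerivAt (Set.mem_univ 0) (Set.mem_univ 1) zero_lt_one h2
  simpa [slope_def_field] using h3

/-- Strong convexity of the regularised objectives controls the acceleration
`y'' = -A y' - g - B y` paired with `y - z`, for `g` in the convex hull of the gradients. -/
lemma inner_accel_le {ι : Type*} [Finite ι] {f : ι → H → ℝ}
    (hc : ∀ i, ConvexOn ℝ Set.univ (f i)) (hf : ∀ i, Differentiable ℝ (f i)) {A B : ℝ}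
    {y y' y'' z g : H} (hg : g ∈ convexHull ℝ (Set.range fun i => gradient (f i) y))
    (hode : g + B • y + y'' = (-A) • y') :
    ⟪y - z, y''⟫_ℝ ≤ -A * ⟪y - z, y'⟫_ℝ
      - (⨅ i, ((f i y + B / 2 * ‖y‖ ^ 2) - (f i z + B / 2 * ‖z‖ ^ 2))) - B / 2 * ‖y - z‖ ^ 2 := by
  set h := ⨅ i, ((f i y + B / 2 * ‖y‖ ^ 2) - (f i z + B / 2 * ‖z‖ ^ 2)) with hh
  -- `B ⟪y - z, y⟫ - (B/2)‖y - z‖² = (B/2)(‖y‖² - ‖z‖²)`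
  have hpol : ‖y - z‖ ^ 2 = ‖y‖ ^ 2 - 2 * ⟪y, z⟫_ℝ + ‖z‖ ^ 2 := norm_sub_sq_real y z
  have hyz : ⟪y - z, y⟫_ℝ = ‖y‖ ^ 2 - ⟪y, z⟫_ℝ := by
    rw [inner_sub_left, real_inner_self_eq_norm_sq, real_inner_comm]
  -- The bound holds for each gradient and describes a half-space, so it passes to the convex hull.
  have hhalf : Convex ℝ {u : H | h + B / 2 * ‖y - z‖ ^ 2 - B * ⟪y - z, y⟫_ℝ ≤ ⟪y - z, u⟫_ℝ} :=
    convex_halfSpace_ge (innerSL ℝ (y - z)).isLinear _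
  have hsub : Set.range (fun i => gradient (f i) y) ⊆
      {u : H | h + B / 2 * ‖y - z‖ ^ 2 - B * ⟪y - z, y⟫_ℝ ≤ ⟪y - z, u⟫_ℝ} := by
    rintro _ ⟨i, rfl⟩
    have h1 : h ≤ (f i y + B / 2 * ‖y‖ ^ 2) - (f i z + B / 2 * ‖z‖ ^ 2) :=
      ciInf_le (Set.finite_range _).bddBelow i
    have h2 := gradient_ineq (hc i) (hf i) y z
    rw [real_inner_comm] at h2
    simp only [Set.mem_ofPred_eq]
    rw [hpol, hyz]
    linarith
  have h1 : h + B / 2 * ‖y - z‖ ^ 2 - B * ⟪y - z, y⟫_ℝ ≤ ⟪y - z, g⟫_ℝ :=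
    convexHull_min hsub hhalf hg
  have h2 : y'' = (-A) • y' - g - B • y := by rw [← hode]; abel
  rw [h2, inner_sub_right, inner_sub_right, real_inner_smul_right, real_inner_smul_right]
  linarith

end Inner

/-! ### The energy estimate -/

lemma hasDerivAt_div_two_mul_rpow (β p : ℝ) {t : ℝ} (ht : 0 < t) :
    HasDerivAt (fun s : ℝ => β / (2 * s ^ p)) (-(p * β / (2 * t ^ (p + 1)))) t := by
  have h1 : HasDerivAt (fun s : ℝ => 2 * s ^ p) (2 * (p * t ^ (p - 1))) t :=
    (Real.hasDerivAt_rpow_const (Or.inl ht.ne')).const_mul 2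
  have hpos := Real.rpow_pos_of_pos ht p
  have h2 := (hasDerivAt_const t β).div h1 (by positivity)
  refine h2.congr_deriv ?_
  rw [Real.rpow_sub_one ht.ne', Real.rpow_add_one ht.ne']
  field_simp
  ring

/-- For a trajectory solution `x` of (MTRIGS), `λ > 0`, `r ∈ [q,1]`, `z ∈ H`,
the energy `E(t) = t^{2r} min_i (f_{t,i}(x(t)) − f_{t,i}(z)) + ½‖λ(x(t)−z)+t^r ẋ(t)‖²
+ (λ/2)(r t^{r−1}+α t^{r−q}−2λ)‖x(t)−z‖²` is absolutely continuous on compact intervals,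
differentiable a.e. on `[t₀,∞)`, with the stated a.e. derivative bound. -/
theorem stmt_12
    {H : Type*} [NormedAddCommGroup H] [InnerProductSpace ℝ H] [CompleteSpace H]
    {m : ℕ} (hm : 0 < m) (f : Fin m → H → ℝ)
    (hconv : ∀ i, ConvexOn ℝ Set.univ (f i))
    (hdiff : ∀ i, Differentiable ℝ (f i))
    (hlip : ∀ i, ∃ L : ℝ≥0, LipschitzWith L (gradient (f i)))
    (t₀ α β q p : ℝ) (ht₀ : 0 < t₀) (hα : 0 < α) (hβ : 0 < β)
    (hq : q ∈ Set.Ioc (0:ℝ) 1) (hp : p ∈ Set.Ioc (0:ℝ) 2)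
    (x x' x'' : ℝ → H)
    (hx : ∀ t ∈ Set.Ici t₀, HasDerivAt x (x' t) t)
    (hx'c : ContinuousOn x' (Set.Ici t₀))
    (hx''m : StronglyMeasurable x'')
    (hx'int : ∀ t ∈ Set.Ici t₀, x' t = x' t₀ + ∫ s in t₀..t, x'' s)
    (hx'' : ∀ᵐ t ∂(volume.restrict (Set.Ici t₀)), HasDerivAt x' (x'' t) t)
    (hMTRIGS : ∀ᵐ t ∂(volume.restrict (Set.Ici t₀)),
      ((-(α / t ^ q)) • x' t ∈
        (fun g => g + (β / t ^ p) • x t + x'' t) ''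
          (convexHull ℝ (Set.range fun i => gradient (f i) (x t)))) ∧
      (∀ w ∈ (fun g => g + (β / t ^ p) • x t + x'' t) ''
          (convexHull ℝ (Set.range fun i => gradient (f i) (x t))),
        ‖(α / t ^ q) • x' t‖ ≤ ‖w‖))
    (lam : ℝ) (hlam : 0 < lam) (r : ℝ) (hr : r ∈ Set.Icc q 1) (z : H)
    (E : ℝ → ℝ)
    (hE : ∀ t : ℝ, E t =
      t ^ (2 * r) * (⨅ i, ((f i (x t) + β / (2 * t ^ p) * ‖x t‖ ^ 2)
          - (f i z + β / (2 * t ^ p) * ‖z‖ ^ 2)))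
        + (1/2) * ‖lam • (x t - z) + t ^ r • x' t‖ ^ 2
        + lam / 2 * (r * t ^ (r - 1) + α * t ^ (r - q) - 2 * lam) * ‖x t - z‖ ^ 2) :
    (∀ T ∈ Set.Ici t₀, AbsContOn E t₀ T) ∧
    (∀ᵐ t ∂(volume.restrict (Set.Ici t₀)), ∃ d : ℝ, HasDerivAt E d t ∧
      d ≤ (2 * r * t ^ (2 * r - 1) - lam * t ^ r)
            * (⨅ i, ((f i (x t) + β / (2 * t ^ p) * ‖x t‖ ^ 2)
                - (f i z + β / (2 * t ^ p) * ‖z‖ ^ 2)))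
          + p * β * t ^ (2 * r) / (2 * t ^ (p + 1)) * ‖z‖ ^ 2
          + lam * (2 * r * t ^ (r - 1) - lam) * ⟪x t - z, x' t⟫_ℝ
          + t ^ r * (lam + r * t ^ (r - 1) - α * t ^ (r - q)) * ‖x' t‖ ^ 2
          + lam / 2 * (r * (r - 1) * t ^ (r - 2) + α * (r - q) * t ^ (r - q - 1)
              - β * t ^ (r - p)) * ‖x t - z‖ ^ 2) := by
  have : Nonempty (Fin m) := ⟨⟨0, hm⟩⟩
  have hpos : ∀ t ∈ Set.Ici t₀, 0 < t := fun t ht => ht₀.trans_le ht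
  have hxc : ContinuousOn x (Set.Ici t₀) := fun t ht => (hx t ht).continuousAt.continuousWithinAt
  have hgc : ∀ i, ContinuousOn (fun t => gradient (f i) (x t)) (Set.Ici t₀) := fun i => by
    obtain ⟨L, hL⟩ := hlip i
    exact hL.continuous.comp_continuousOn hxc
  have hpow : ∀ c : ℝ, ContinuousOn (fun t : ℝ => t ^ c) (Set.Ici t₀) := fun c t ht =>
    (Real.continuousAt_rpow_const t c (Or.inl (hpos t ht).ne')).continuousWithinAt
  have hpow0 : ∀ c : ℝ, ∀ t ∈ Set.Ici t₀, t ^ c ≠ 0 := fun c t ht =>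
    (Real.rpow_pos_of_pos (hpos t ht) c).ne'
  have hsub : ∀ T : ℝ, Set.Icc t₀ T ⊆ Set.Ici t₀ := fun T t ht => ht.1
  let φ : Fin m → ℝ → ℝ := fun i t => (f i (x t) + β / (2 * t ^ p) * ‖x t‖ ^ 2)
          - (f i z + β / (2 * t ^ p) * ‖z‖ ^ 2)
  let φ' : Fin m → ℝ → ℝ := fun i t => (⟪gradient (f i) (x t), x' t⟫_ℝ
      + (-(p * β / (2 * t ^ (p + 1))) * ‖x t‖ ^ 2 + β / (2 * t ^ p) * (2 * ⟪x t, x' t⟫_ℝ)))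
      - -(p * β / (2 * t ^ (p + 1))) * ‖z‖ ^ 2
  have hφ : ∀ i, ∀ t ∈ Set.Ici t₀, HasDerivAt (φ i) (φ' i t) t := by
    intro i t ht
    have h1 := hasDerivAt_div_two_mul_rpow β p (hpos t ht)
    exact ((hasDerivAt_comp_gradient (hdiff i) (hx t ht)).add (h1.mul (hx t ht).norm_sq)).sub
      ((h1.mul_const _).const_add (f i z))
  have hφ'c : ∀ i, ContinuousOn (φ' i) (Set.Ici t₀) := by
    intro i
    have e1 : ContinuousOn (fun t => p * β / (2 * t ^ (p + 1))) (Set.Ici t₀) :=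
      continuousOn_const.div (continuousOn_const.mul (hpow _))
        fun t ht => mul_ne_zero two_ne_zero (hpow0 _ t ht)
    have e2 : ContinuousOn (fun t => β / (2 * t ^ p)) (Set.Ici t₀) :=
      continuousOn_const.div (continuousOn_const.mul (hpow _))
        fun t ht => mul_ne_zero two_ne_zero (hpow0 _ t ht)
    exact (((hgc i).inner hx'c).add ((e1.neg.mul (hxc.norm.pow 2)).add
      (e2.mul (continuousOn_const.mul (hxc.inner hx'c))))).sub (e1.neg.mul continuousOn_const)
  have hhL : ∀ T ∈ Set.Ici t₀, LipOn (fun t => ⨅ i, φ i t) t₀ T := fun T _ =>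
    LipOn.iInf fun i => LipOn.of_hasDerivAt (fun t ht => hφ i t ht.1) ((hφ'c i).mono (hsub T))
  have hxL : ∀ T ∈ Set.Ici t₀, LipOn x t₀ T := fun T _ =>
    LipOn.of_hasDerivAt (fun t ht => hx t ht.1) (hx'c.mono (hsub T))
  have hx'L : ∀ T ∈ Set.Ici t₀, LipOn x' t₀ T := by
    intro T _
    have c1 : ContinuousOn (fun t => (-(α / t ^ q)) • x' t) (Set.Ici t₀) :=
      (continuousOn_const.div (hpow q) (hpow0 q)).neg.smul hx'c
    have c2 : ContinuousOn (fun t => (β / t ^ p) • x t) (Set.Ici t₀) :=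
      (continuousOn_const.div (hpow p) (hpow0 p)).smul hxc
    -- The differential equation bounds `x''` by continuous functions of `t` on `[t₀, T]`.
    obtain ⟨C₁, hC₁⟩ := isCompact_Icc.exists_bound_of_continuousOn (c1.mono (hsub T))
    obtain ⟨C₂, hC₂⟩ := isCompact_Icc.exists_bound_of_continuousOn (c2.mono (hsub T))
    choose G hG using fun i =>
      isCompact_Icc.exists_bound_of_continuousOn ((hgc i).mono (hsub T))
    refine LipOn.velocity (C := |C₁| + ∑ i, |G i| + |C₂|) (by positivity) hx''m
      (fun t ht => hx'int t ht.1) ?_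
    filter_upwards [(ae_restrict_iff' measurableSet_Ici).1 hMTRIGS] with t hM ht
    obtain ⟨⟨g, hg, hode⟩, -⟩ := hM ht.1
    have hgb : g ∈ Metric.closedBall (0 : H) (∑ i, |G i|) := by
      refine convexHull_min ?_ (convex_closedBall _ _) hg
      rintro _ ⟨i, rfl⟩
      rw [mem_closedBall_zero_iff]
      exact ((hG i t ht).trans (le_abs_self _)).trans
        (Finset.single_le_sum (f := fun i => |G i|) (fun j _ => abs_nonneg _) (Finset.mem_univ i))
    rw [mem_closedBall_zero_iff] at hgb
    have e : x'' t = (-(α / t ^ q)) • x' t - g - (β / t ^ p) • x t := by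
      rw [← hode]
      simp only
      abel
    rw [e]
    refine (norm_sub_le _ _).trans (add_le_add ((norm_sub_le _ _).trans (add_le_add ?_ hgb)) ?_)
    · exact (hC₁ t ht).trans (le_abs_self _)
    · exact (hC₂ t ht).trans (le_abs_self _)
  have hE' : E = fun t => t ^ (2 * r) * (⨅ i, φ i t)
        + (1/2) * ‖lam • (x t - z) + t ^ r • x' t‖ ^ 2
        + lam / 2 * (r * t ^ (r - 1) + α * t ^ (r - q) - 2 * lam) * ‖x t - z‖ ^ 2 := funext hE
  refine ⟨fun T hT => LipOn.absContOn ?_, ?_⟩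
  · have hxz : LipOn (fun t => x t - z) t₀ T := by
      simpa only [sub_eq_add_neg] using (hxL T hT).add (LipOn.const (-z))
    rw [hE']
    refine (((LipOn.rpow ht₀ _).mul (hhL T hT)).add ((LipOn.const (1 / 2 : ℝ)).mul
      (((LipOn.const lam).smul hxz).add ((LipOn.rpow ht₀ r).smul (hx'L T hT))).norm_sq)).add ?_
    refine ((LipOn.const (lam / 2)).mul ?_).mul hxz.norm_sq
    simp only [sub_eq_add_neg _ (2 * lam)]
    exact (((LipOn.const r).mul (LipOn.rpow ht₀ _)).add
      ((LipOn.const α).mul (LipOn.rpow ht₀ _))).add (LipOn.const _)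
  · filter_upwards [hx'', hMTRIGS, LipOn.ae_differentiableAt hhL,
      ae_restrict_mem measurableSet_Ici] with t hxt hM hhd ht
    have htp := hpos t ht
    obtain ⟨⟨g, hg, hode⟩, hmin⟩ := hM
    obtain ⟨h', hh'⟩ : ∃ h', HasDerivAt (fun t => ⨅ i, φ i t) h' t := ⟨_, hhd.hasDerivAt⟩
    have hA : 0 < α / t ^ q := div_pos hα (Real.rpow_pos_of_pos htp q)
    obtain ⟨i, hi⟩ := exists_eq_ciInf_of_finite (f := fun i => φ i t)
    have hh'eq : h' = φ' i t := deriv_iInf_eq hi hh' (hφ i t ht)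
    have hB : β / (2 * t ^ p) = β / t ^ p / 2 := by rw [mul_comm, div_div]
    have hKconv : Convex ℝ ((fun g => g + (β / t ^ p) • x t + x'' t) ''
        (convexHull ℝ (Set.range fun i => gradient (f i) (x t)))) := by
      have := (convex_convexHull ℝ (Set.range fun i => gradient (f i) (x t))).vadd
        ((β / t ^ p) • x t + x'' t)
      convert this using 1
      rw [← Set.image_vadd]
      exact Set.image_congr fun g _ => by simp only [vadd_eq_add]; abel
    have hv := inner_add_le_of_minimal hKconv hA ⟨g, hg, hode⟩ hmin
      (Set.mem_image_of_mem _ (subset_convexHull ℝ _ (Set.mem_range_self i)))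
    have hacc := inner_accel_le hconv hdiff (z := z) hg hode
    rw [← hB] at hacc
    rw [inner_add_left, inner_add_left, real_inner_smul_left, real_inner_comm (x' t) (x'' t)] at hv
    have hc0 : 0 ≤ p * β / (2 * t ^ (p + 1)) :=
      div_nonneg (mul_nonneg hp.1.le hβ.le)
        (mul_nonneg zero_le_two (Real.rpow_nonneg htp.le _))
    -- The term `-(pβ/(2t^{p+1}))‖x‖²` of `h'` is nonpositive and is discarded here.
    have key1 : h' + ⟪x' t, x'' t⟫_ℝ ≤ -(α / t ^ q) * ‖x' t‖ ^ 2
        + p * β / (2 * t ^ (p + 1)) * ‖z‖ ^ 2 := by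
      have := mul_nonneg hc0 (sq_nonneg ‖x t‖)
      rw [hh'eq]
      simp only [φ', hB]
      linarith
    have dx : HasDerivAt (fun s => x s - z) (x' t) t := (hx t ht).sub_const z
    have dp : ∀ c : ℝ, HasDerivAt (fun s : ℝ => s ^ c) (c * t ^ (c - 1)) t := fun c =>
      Real.hasDerivAt_rpow_const (Or.inl htp.ne')
    have dE := (((dp (2 * r)).mul hh').add
      ((((dx.const_smul lam).add ((dp r).smul hxt)).norm_sq).const_mul (1 / 2 : ℝ))).add
      ((((((dp (r - 1)).const_mul r).add ((dp (r - q)).const_mul α)).sub_const (2 * lam)).const_mul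
        (lam / 2)).mul dx.norm_sq)
    rw [hE']
    refine ⟨_, dE, ?_⟩
    -- Over the common factor `t ^ r`, the inequality is linear in `m1` and `m2` below.
    have e2r : t ^ (2 * r) = t ^ r * t ^ r := by rw [two_mul, Real.rpow_add htp]
    have erq : α * t ^ (r - q) = α / t ^ q * t ^ r := by rw [Real.rpow_sub htp]; ring
    have erp : β * t ^ (r - p) = β / (2 * t ^ p) * t ^ r * 2 := by
      rw [Real.rpow_sub htp]; field_simp
    have er2 : r - 1 - 1 = r - 2 := by ring
    have ep : p * β * t ^ (2 * r) / (2 * t ^ (p + 1))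
        = p * β / (2 * t ^ (p + 1)) * (t ^ r * t ^ r) := by rw [e2r]; ring
    have hr0 := Real.rpow_pos_of_pos htp r
    have m1 := mul_le_mul_of_nonneg_left key1 (mul_pos hr0 hr0).le
    have m2 := mul_le_mul_of_nonneg_left hacc (mul_pos hlam hr0).le
    change _ ≤ (2 * r * t ^ (2 * r - 1) - lam * t ^ r) * (⨅ i, φ i t) + _ + _ + _ + _
    change lam * t ^ r * _ ≤ lam * t ^ r * (_ - (⨅ i, φ i t) - _) at m2
    simp only [inner_add_left, inner_add_right, real_inner_smul_left, real_inner_smul_right,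
      real_inner_self_eq_norm_sq, Pi.add_apply, Pi.smul_apply, Pi.smul_apply', er2, ep]
    rw [erq, erp, e2r]
    linarith
end

section
/- Let p ∈ (0,2] and q ∈ (0,1) with 2q < p. Let x be a trajectory solution of (MTRIGS) that is bounded on [t₀,∞). Assume S(F(x(t))) ≠ ∅ for every t ≥ t₀ and assume (A3). Then, as t → ∞: (a) min_{i=1,…,m}(f_{t,i}(x(t)) − f_{t,i}(z(t))) = O(t^{−2q}); (b) there exist C ≥ 0 and T ≥ t₀ with φ(x(t)) ≤ C·t^{−2q} for all t ≥ T; (c) ‖x(t) − z(t)‖ = O(1); (d) ‖ẋ(t)‖ = O(t^{−q}). -/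
open Filter Topology MeasureTheory
open scoped NNReal InnerProductSpace

/-!
The proof is a Lyapunov estimate in which the Tikhonov term is a perturbation of order
`t^{-p} = o(t^{-2q})`.

Fix a reference point `u` and write `P = t^q`. Two consequences of (MTRIGS) hold for almost every `t`
(`IsTraj.ae_facts`). Minimality of the norm says that every energy
`W_i = f_i(x) + β/(2t^p) ‖x‖² + ‖ẋ‖²/2` satisfies `W_i' ≤ -(α/P) ‖ẋ‖²`. Membership in `K(t)`,
convexity, and the choice of an index `i` with smallest gap `f_i(x) - f_i(u)` give
`⟨x - u, ẍ⟩ ≤ -(α/P) ⟨x - u, ẋ⟩ - (f_i(x) - f_i(u)) - (β/t^p) ⟨x - u, x⟩`.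
Combining them, the function
`Λ_i = P² (W_i - f_i(u)) + (α/2) P ⟨x - u, ẋ⟩ + (α/2)(α - q t^{q-1}) ‖x - u‖²/2`
with minimal index `i` has nonpositive derivative wherever it exceeds a threshold depending only on
bounds for `‖x - u‖` and `‖u‖` (`lyapunov_arith`, `IsTraj.lyapunov_deriv_nonpos`); here `q < 1` and
`2q < p` absorb the error terms. Hence `min_i Λ_i` stays bounded (`barrier`), which is
`min_i (f_i(x) - f_i(u)) + β/(2t^p) ‖x‖² + ‖ẋ‖²/4 = O(t^{-2q})`, uniformly over bounded `u` as long as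
the gaps at the final time are nonnegative (`IsTraj.rate`).

This is applied with a reference point that depends on the final time. By (A3) and the decrease
of the energies, `S(F(x(t)))` contains a point of norm at most `R + 1`; comparison with it gives the
same bound for `z(t)`, hence (c) because `x` is bounded. Taking `u = z(t)` gives (a) and (d), and
`u ∈ S(F(x(t)))` gives (b).

Minima over `i` and the merely almost everywhere defined `ẍ` are handled by absolute continuity:
`ẍ` is locally bounded because the gradients are, so `ẋ` is locally Lipschitz.
-/

section Trajectory

variable {H : Type*} [NormedAddCommGroup H] [InnerProductSpace ℝ H]

/-! ### Absolutely continuous functions and a barrier principle -/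


/-- Absolute continuity passes to any function whose increments are dominated by a finite sum of
increments of absolutely continuous functions; this covers norms and finite minima. -/
lemma ac_of_dist_le {ι X Y : Type*} [PseudoMetricSpace X] [PseudoMetricSpace Y] (s : Finset ι)
    {g : ι → ℝ → X} {F : ℝ → Y} {a b : ℝ}
    (hg : ∀ i ∈ s, AbsolutelyContinuousOnInterval (g i) a b)
    (h : ∀ u v, dist (F u) (F v) ≤ ∑ i ∈ s, dist (g i u) (g i v)) :
    AbsolutelyContinuousOnInterval F a b := by
  have hsum := tendsto_finsetSum s (fun i hi => hg i hi)
  rw [Finset.sum_const_zero] at hsum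
  refine squeeze_zero (fun E => Finset.sum_nonneg fun _ _ => dist_nonneg) (fun E => ?_) hsum
  rw [Finset.sum_comm]
  exact Finset.sum_le_sum fun k _ => h _ _

lemma ac_norm {E : Type*} [SeminormedAddCommGroup E] {u : ℝ → E} {a b : ℝ}
    (hu : AbsolutelyContinuousOnInterval u a b) :
    AbsolutelyContinuousOnInterval (fun t => ‖u t‖) a b :=
  ac_of_dist_le (Finset.univ : Finset Unit) (g := fun _ => u) (fun _ _ => hu) fun s t => by
    simpa [dist_eq_norm (u s)] using dist_norm_norm_le (u s) (u t)

lemma ac_inner {u v : ℝ → H} {a b : ℝ}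
    (hu : AbsolutelyContinuousOnInterval u a b) (hv : AbsolutelyContinuousOnInterval v a b) :
    AbsolutelyContinuousOnInterval (fun t => ⟪u t, v t⟫_ℝ) a b := by
  have h1 := ac_norm (hu.add hv)
  have h2 := ac_norm (hu.sub hv)
  have h3 := ((h1.fun_mul h1).fun_sub (h2.fun_mul h2)).const_mul (4⁻¹)
  convert h3 using 2 with t
  have e1 := norm_add_sq_real (u t) (v t)
  have e2 := norm_sub_sq_real (u t) (v t)
  simp only [Pi.add_apply, Pi.sub_apply]
  linarith

lemma ac_of_hasDerivAt {E : Type*} [NormedAddCommGroup E] [NormedSpace ℝ E] {u u' : ℝ → E}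
    {a b : ℝ} (hab : a ≤ b) (hu : ∀ t ∈ Set.Icc a b, HasDerivAt u (u' t) t)
    (hc : ContinuousOn u' (Set.Icc a b)) : AbsolutelyContinuousOnInterval u a b := by
  obtain ⟨C, hC⟩ := isCompact_Icc.exists_bound_of_continuousOn hc
  have : LipschitzOnWith C.toNNReal u (Set.uIcc a b) := by
    rw [Set.uIcc_of_le hab]
    refine (convex_Icc a b).lipschitzOnWith_of_nnnorm_hasDerivWithin_le
      (fun t ht => (hu t ht).hasDerivWithinAt) fun t ht => ?_
    rw [← NNReal.coe_le_coe, coe_nnnorm]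
    exact (hC t ht).trans (Real.le_coe_toNNReal C)
  exact this.absolutelyContinuousOnInterval

lemma ac_const {E : Type*} [NormedAddCommGroup E] [NormedSpace ℝ E] {a b : ℝ} (hab : a ≤ b)
    (c : E) : AbsolutelyContinuousOnInterval (fun _ : ℝ => c) a b :=
  ac_of_hasDerivAt hab (fun s _ => hasDerivAt_const s c) continuousOn_const

/-- Barrier principle for a finite minimum. If, almost everywhere on `(a, b)`, each minimal `g i` lying
above the level `C` has nonpositive derivative, then `min_i g i` cannot rise above the larger of
its initial value and `C`: the absolutely continuous function `max (min_i g i) C` has nonpositive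
derivative almost everywhere. -/
lemma barrier {m : ℕ} {g : Fin m → ℝ → ℝ} {a b C : ℝ} (hab : a ≤ b)
    (hg : ∀ i, AbsolutelyContinuousOnInterval (g i) a b) (j : Fin m)
    (h : ∀ᵐ t, t ∈ Set.Ioo a b → ∀ i, (∀ k, g i t ≤ g k t) → C < g i t →
      ∃ d ≤ 0, HasDerivAt (g i) d t) :
    ∃ i, g i b ≤ max (g j a) C := by
  have : Nonempty (Fin m) := ⟨j⟩
  set F : ℝ → ℝ := fun t => max (⨅ i, g i t) C with hF
  have hle : ∀ i t, ⨅ i, g i t ≤ g i t := fun i t => ciInf_le (Set.finite_range _).bddBelow i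
  have hFac : AbsolutelyContinuousOnInterval F a b := by
    refine ac_of_dist_le Finset.univ (g := g) (fun i _ => hg i) ?_
    have key : ∀ u v, F u - F v ≤ ∑ i, dist (g i u) (g i v) := by
      intro u v
      obtain ⟨i, hi⟩ := exists_eq_ciInf_of_finite (f := fun i => g i v)
      have h1 : g i u - g i v ≤ ∑ i, dist (g i u) (g i v) :=
        (le_abs_self _).trans (Finset.single_le_sum (f := fun i => dist (g i u) (g i v))
          (fun _ _ => dist_nonneg) (Finset.mem_univ i))
      have h0 : 0 ≤ ∑ i, dist (g i u) (g i v) := Finset.sum_nonneg fun _ _ => dist_nonneg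
      have h2 := hle i u
      have h3 : F u ≤ F v + ∑ i, dist (g i u) (g i v) := by
        refine max_le ?_ ?_
        · have : ⨅ i, g i v ≤ F v := le_max_left _ _
          linarith
        · have : C ≤ F v := le_max_right _ _
          linarith
      linarith
    intro u v
    rw [Real.dist_eq, abs_le]
    refine ⟨?_, key u v⟩
    have := key v u
    simp only [dist_comm (g _ v)] at this
    linarith
  have hder : ∀ᵐ t, t ∈ Set.Ioo a b → deriv F t ≤ 0 := by
    filter_upwards [h, hFac.ae_differentiableAt] with t ht hdt htab
    have hd : HasDerivAt F (deriv F t) t :=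
      (hdt (by rw [Set.uIcc_of_le hab]; exact Set.Ioo_subset_Icc_self htab)).hasDerivAt
    rcases le_or_gt (⨅ i, g i t) C with hC | hC
    -- below the level `C`, the point `t` is a global minimum of `F`
    · have hmin : IsLocalMin F t := Eventually.of_forall fun s => by
        change F t ≤ F s
        rw [hF]; simp only [max_eq_right hC]; exact le_max_right _ _
      exact (hmin.hasDerivAt_eq_zero hd).le
    · obtain ⟨i, hi⟩ := exists_eq_ciInf_of_finite (f := fun i => g i t)
      obtain ⟨d, hd0, hgd⟩ := ht htab i (fun k => hi ▸ hle k t) (hi ▸ hC)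
      -- `max (g i) C` touches `F` from above at `t`, so the derivatives agree
      have hmin : IsLocalMin (fun s => max (g i s) C - F s) t := Eventually.of_forall fun s => by
        have h1 : F s ≤ max (g i s) C := max_le_max_right _ (hle i s)
        have h2 : F t = max (g i t) C := by rw [hF]; simp only [hi]
        simp only [h2, sub_self]; linarith
      have hgd' : HasDerivAt (fun s => max (g i s) C) d t := by
        refine hgd.congr_of_eventuallyEq ?_
        have : ∀ᶠ s in 𝓝 t, C < g i s := hgd.continuousAt.eventually_const_lt (hi ▸ hC)
        filter_upwards [this] with s hs using max_eq_left hs.le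
      have := hmin.hasDerivAt_eq_zero (hgd'.sub hd)
      linarith
  have hint : ∫ t in a..b, deriv F t ≤ 0 := by
    rw [intervalIntegral.integral_of_le hab, integral_Ioc_eq_integral_Ioo]
    exact integral_nonpos_of_ae ((ae_restrict_iff' measurableSet_Ioo).2 hder)
  rw [hFac.integral_deriv_eq_sub] at hint
  obtain ⟨i, hi⟩ := exists_eq_ciInf_of_finite (f := fun i => g i b)
  refine ⟨i, ?_⟩
  have h1 : g i b ≤ F b := by rw [hi]; exact le_max_left _ _
  have h2 : F a ≤ max (g j a) C := max_le_max_right _ (hle j a)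
  linarith

/-- A velocity that is the integral of an essentially bounded acceleration is absolutely continuous.
The bound makes `w` integrable, so that the interval integral is not a junk value. -/
lemma ac_velocity {v w : ℝ → H} {a b K : ℝ} (hab : a ≤ b) (hm : StronglyMeasurable w)
    (hv : ∀ t ∈ Set.Icc a b, v t = v a + ∫ s in a..t, w s)
    (hK : ∀ᵐ t, t ∈ Set.Icc a b → ‖w t‖ ≤ K) : AbsolutelyContinuousOnInterval v a b := by
  have hint : ∀ s ∈ Set.Icc a b, IntervalIntegrable w volume a s := by
    intro s hs
    rw [intervalIntegrable_iff_integrableOn_Ioc_of_le hs.1]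
    refine IntegrableOn.of_bound measure_Ioc_lt_top hm.aestronglyMeasurable K ?_
    rw [ae_restrict_iff' measurableSet_Ioc]
    filter_upwards [hK] with t ht h using ht ⟨h.1.le, h.2.trans hs.2⟩
  have : LipschitzOnWith K.toNNReal v (Set.uIcc a b) := by
    rw [Set.uIcc_of_le hab]
    refine LipschitzOnWith.of_dist_le_mul fun t ht s hs => ?_
    rw [hv t ht, hv s hs, dist_add_left, dist_eq_norm,
      intervalIntegral.integral_interval_sub_left (hint t ht) (hint s hs), Real.dist_eq]
    refine intervalIntegral.norm_integral_le_of_norm_le_const_ae ?_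
    filter_upwards [hK] with r hr hr2
    refine (hr ?_).trans (Real.le_coe_toNNReal K)
    exact Set.uIcc_subset_Icc hs ht (Set.uIoc_subset_uIcc hr2)
  exact this.absolutelyContinuousOnInterval
/-! ### The minimal norm condition and convexity -/

/-- The variational inequality for the minimal norm element `-γ V` of the translated convex hull,
rewritten as a dissipation estimate. -/
lemma inner_le_of_min_norm {G : Set H} {V X A : H} {γ ε : ℝ} (hγ : 0 < γ)
    (hmem : (-γ) • V ∈ (fun g => g + ε • X + A) '' convexHull ℝ G)
    (hmin : ∀ w ∈ (fun g => g + ε • X + A) '' convexHull ℝ G, ‖γ • V‖ ≤ ‖w‖) {g : H}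
    (hg : g ∈ convexHull ℝ G) : ⟪g + ε • X + A, V⟫_ℝ ≤ -γ * ‖V‖ ^ 2 := by
  set K := (fun g => g + ε • X + A) '' convexHull ℝ G with hK
  have hconv : Convex ℝ K := by
    have : K = (fun g => (ε • X + A) + g) '' convexHull ℝ G := by
      rw [hK]; congr 1; ext g; abel
    rw [this]
    exact (convex_convexHull ℝ G).translate _
  have hne : Nonempty K := ⟨⟨_, hmem⟩⟩
  have h1 : ‖(0 : H) - (-γ) • V‖ = ⨅ w : K, ‖(0 : H) - w‖ := by
    refine le_antisymm (le_ciInf fun w => ?_) ?_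
    · simpa using hmin w w.2
    · exact ciInf_le ⟨0, by rintro _ ⟨w, rfl⟩; exact norm_nonneg _⟩ (⟨_, hmem⟩ : K)
  have h2 := (norm_eq_iInf_iff_real_inner_le_zero hconv hmem).1 h1 _ ⟨g, hg, rfl⟩
  have e : (0 : H) - (-γ) • V = γ • V := by rw [neg_smul, sub_neg_eq_add, zero_add]
  have e' : g + ε • X + A - (-γ) • V = (g + ε • X + A) + γ • V := by
    rw [neg_smul, sub_neg_eq_add]
  simp only [e, e'] at h2
  rw [real_inner_smul_left, inner_add_right, real_inner_smul_right, real_inner_self_eq_norm_sq,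
    real_inner_comm] at h2
  have h3 := nonpos_of_mul_nonpos_right h2 hγ
  linarith

lemma hasDerivAt_tik (β : ℝ) {p t : ℝ} (ht : 0 < t) :
    HasDerivAt (fun s : ℝ => β / (2 * s ^ p)) (-(β / 2 * p * t ^ (-p - 1))) t := by
  have h := (Real.hasDerivAt_rpow_const (x := t) (p := -p) (Or.inl ht.ne')).const_mul (β / 2)
  have e : (fun s : ℝ => β / (2 * s ^ p)) =ᶠ[𝓝 t] fun s => β / 2 * s ^ (-p) := by
    filter_upwards [lt_mem_nhds ht] with s hs
    rw [Real.rpow_neg hs.le]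
    field_simp
  exact (h.congr_of_eventuallyEq e).congr_deriv (by ring)

variable [CompleteSpace H]

/-- The gradient inequality for convex functions. -/
lemma convex_gradient_le {f : H → ℝ} (hc : ConvexOn ℝ Set.univ f) (hd : Differentiable ℝ f)
    (x u : H) : ⟪gradient f x, u - x⟫_ℝ ≤ f u - f x := by
  have h1 : HasDerivAt (f ∘ (AffineMap.lineMap x u : ℝ →ᵃ[ℝ] H)) (⟪gradient f x, u - x⟫_ℝ) 0 := by
    have h2 : HasFDerivAt f (InnerProductSpace.toDual ℝ H (gradient f x))
        ((AffineMap.lineMap x u : ℝ →ᵃ[ℝ] H) (0:ℝ)) := by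
      rw [AffineMap.lineMap_apply_zero]
      exact (hd x).hasGradientAt.hasFDerivAt
    exact h2.comp_hasDerivAt (0:ℝ) (AffineMap.hasDerivAt_lineMap (a := x) (b := u))
  have h3 : ConvexOn ℝ Set.univ (f ∘ (AffineMap.lineMap x u : ℝ →ᵃ[ℝ] H)) := by
    have := hc.comp_affineMap (AffineMap.lineMap x u : ℝ →ᵃ[ℝ] H)
    rwa [Set.preimage_univ] at this
  have := h3.le_slope_of_hasDerivAt (Set.mem_univ 0) (Set.mem_univ 1) one_pos h1
  simpa [slope_def_field] using this

/-! ### Trajectories and their energies -/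

/-- `x` is a trajectory solution of (MTRIGS) with velocity `x'` and acceleration `x''`, for convex
objectives with continuous gradients. -/
structure IsTraj {m : ℕ} (f : Fin m → H → ℝ) (x x' x'' : ℝ → H) (t₀ α β q p : ℝ) : Prop where
  hconv : ∀ i, ConvexOn ℝ Set.univ (f i)
  hdiff : ∀ i, Differentiable ℝ (f i)
  hgc : ∀ i, Continuous (gradient (f i))
  ht₀ : 0 < t₀
  hα : 0 < α
  hβ : 0 < β
  hp : 0 < p
  hx : ∀ t, t₀ ≤ t → HasDerivAt x (x' t) t
  hx'c : ContinuousOn x' (Set.Ici t₀)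
  hx''m : StronglyMeasurable x''
  hx'int : ∀ t, t₀ ≤ t → x' t = x' t₀ + ∫ s in t₀..t, x'' s
  hx'' : ∀ᵐ t, t₀ ≤ t → HasDerivAt x' (x'' t) t
  hM : ∀ᵐ t, t₀ ≤ t → ((-(α / t ^ q)) • x' t ∈
        (fun g => g + (β / t ^ p) • x t + x'' t) ''
          (convexHull ℝ (Set.range fun i => gradient (f i) (x t)))) ∧
      (∀ w ∈ (fun g => g + (β / t ^ p) • x t + x'' t) ''
          (convexHull ℝ (Set.range fun i => gradient (f i) (x t))),
        ‖(α / t ^ q) • x' t‖ ≤ ‖w‖)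

/-- The energy `f_i(x) + β/(2t^p) ‖x‖² + ‖ẋ‖²/2` of the trajectory for the `i`-th objective. -/
noncomputable def energy {m : ℕ} (f : Fin m → H → ℝ) (x x' : ℝ → H) (β p : ℝ) (i : Fin m)
    (t : ℝ) : ℝ :=
  f i (x t) + β / (2 * t ^ p) * ‖x t‖ ^ 2 + (1 / 2) * ‖x' t‖ ^ 2

namespace IsTraj

variable {m : ℕ} {f : Fin m → H → ℝ} {x x' x'' : ℝ → H} {t₀ α β q p : ℝ}

lemma continuousOn_x (T : IsTraj f x x' x'' t₀ α β q p) : ContinuousOn x (Set.Ici t₀) :=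
  fun t ht => (T.hx t ht).continuousAt.continuousWithinAt

lemma hasDerivAt_f (T : IsTraj f x x' x'' t₀ α β q p) (i : Fin m) {t : ℝ} (ht : t₀ ≤ t) :
    HasDerivAt (fun s => f i (x s)) ⟪gradient (f i) (x t), x' t⟫_ℝ t :=
  (T.hdiff i (x t)).hasGradientAt.hasFDerivAt.comp_hasDerivAt t (T.hx t ht)

lemma ac_x (T : IsTraj f x x' x'' t₀ α β q p) {a b : ℝ} (ha : t₀ ≤ a) (hab : a ≤ b) :
    AbsolutelyContinuousOnInterval x a b :=
  ac_of_hasDerivAt hab (fun t ht => T.hx t (ha.trans ht.1))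
    (T.hx'c.mono fun _ ht => ha.trans ht.1)

lemma ac_f (T : IsTraj f x x' x'' t₀ α β q p) (i : Fin m) {a b : ℝ} (ha : t₀ ≤ a) (hab : a ≤ b) :
    AbsolutelyContinuousOnInterval (fun s => f i (x s)) a b := by
  have hs : Set.Icc a b ⊆ Set.Ici t₀ := fun _ ht => ha.trans ht.1
  exact ac_of_hasDerivAt hab (fun t ht => T.hasDerivAt_f i (ha.trans ht.1))
    (((T.hgc i).comp_continuousOn (T.continuousOn_x.mono hs)).inner (T.hx'c.mono hs))

/-- The inclusion expresses `x''` through `x'`, `x` and a convex combination of gradients, so it is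
locally bounded. -/
lemma ac_x' (T : IsTraj f x x' x'' t₀ α β q p) {a b : ℝ} (ha : t₀ ≤ a) (hab : a ≤ b) :
    AbsolutelyContinuousOnInterval x' a b := by
  have hs : Set.Icc t₀ b ⊆ Set.Ici t₀ := fun _ ht => ht.1
  have hpos : ∀ t ∈ Set.Icc t₀ b, 0 < t := fun t ht => T.ht₀.trans_le ht.1
  have hpow : ∀ r : ℝ, ContinuousOn (fun t : ℝ => t ^ r) (Set.Icc t₀ b) := fun r t ht =>
    (Real.continuousAt_rpow_const t r (Or.inl (hpos t ht).ne')).continuousWithinAt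
  have hx'c := T.hx'c.mono hs
  have hxc := T.continuousOn_x.mono hs
  have hc : ContinuousOn (fun t => ‖(α / t ^ q) • x' t‖ + ‖(β / t ^ p) • x t‖
      + ∑ i, ‖gradient (f i) (x t)‖) (Set.Icc t₀ b) := by
    refine ((((continuousOn_const.div (hpow q) ?_).smul hx'c).norm.add
      (((continuousOn_const.div (hpow p) ?_).smul hxc).norm))).add
      (continuousOn_finsetSum _ fun i _ => ((T.hgc i).comp_continuousOn hxc).norm)
    · exact fun t ht => (Real.rpow_pos_of_pos (hpos t ht) q).ne'
    · exact fun t ht => (Real.rpow_pos_of_pos (hpos t ht) p).ne'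
  obtain ⟨K, hK⟩ := isCompact_Icc.exists_bound_of_continuousOn hc
  have hbound : ∀ᵐ t, t ∈ Set.Icc t₀ b → ‖x'' t‖ ≤ K := by
    filter_upwards [T.hM] with t ht htb
    obtain ⟨⟨g, hg, hgeq⟩, -⟩ := ht htb.1
    have hgn : ‖g‖ ≤ ∑ i, ‖gradient (f i) (x t)‖ := by
      have hsub : convexHull ℝ (Set.range fun i => gradient (f i) (x t)) ⊆
          Metric.closedBall 0 (∑ i, ‖gradient (f i) (x t)‖) := by
        refine convexHull_min ?_ (convex_closedBall _ _)
        rintro _ ⟨i, rfl⟩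
        rw [mem_closedBall_zero_iff]
        exact Finset.single_le_sum (f := fun i => ‖gradient (f i) (x t)‖)
          (fun _ _ => norm_nonneg _) (Finset.mem_univ i)
      simpa using hsub hg
    have e : x'' t = -((α / t ^ q) • x' t) - (β / t ^ p) • x t - g := by
      simp only [neg_smul] at hgeq
      rw [← hgeq]; abel
    have h1 := norm_sub_le (-((α / t ^ q) • x' t) - (β / t ^ p) • x t) g
    have h2 := norm_sub_le (-((α / t ^ q) • x' t)) ((β / t ^ p) • x t)
    rw [norm_neg] at h2
    have h3 := (le_abs_self _).trans (hK t htb)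
    rw [e]
    linarith
  have := ac_velocity (ha.trans hab) T.hx''m (fun t ht => T.hx'int t ht.1) hbound
  refine this.mono ?_
  rw [Set.uIcc_of_le hab, Set.uIcc_of_le (ha.trans hab)]
  exact Set.Icc_subset_Icc_left ha

lemma ac_energy (T : IsTraj f x x' x'' t₀ α β q p) (i : Fin m) {a b : ℝ} (ha : t₀ ≤ a)
    (hab : a ≤ b) : AbsolutelyContinuousOnInterval (energy f x x' β p i) a b := by
  have hpos : ∀ t ∈ Set.Icc a b, 0 < t := fun t ht => T.ht₀.trans_le (ha.trans ht.1)
  have h1 : AbsolutelyContinuousOnInterval (fun s : ℝ => β / (2 * s ^ p)) a b :=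
    ac_of_hasDerivAt hab (fun t ht => hasDerivAt_tik β (hpos t ht))
      (continuousOn_const.mul fun t ht => (Real.continuousAt_rpow_const t _
        (Or.inl (hpos t ht).ne')).continuousWithinAt).neg
  have hx := T.ac_x ha hab
  have hx' := T.ac_x' ha hab
  have := ((T.ac_f i ha hab).fun_add (h1.fun_mul (ac_inner hx hx))).fun_add
    ((ac_inner hx' hx').const_mul (1 / 2))
  have e : energy f x x' β p i = fun s => f i (x s) + β / (2 * s ^ p) * ⟪x s, x s⟫_ℝ
      + (1 / 2) * ⟪x' s, x' s⟫_ℝ := by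
    funext s; simp only [energy, real_inner_self_eq_norm_sq]
  rw [e]
  exact this

/-- The two differential inequalities extracted from (MTRIGS): dissipation of every energy, and an
upper bound for `⟨x - u, x''⟩` through the smallest gap `f i (x t) - f i u`. -/
lemma ae_facts (T : IsTraj f x x' x'' t₀ α β q p) : ∀ᵐ t, t₀ ≤ t →
    HasDerivAt x' (x'' t) t ∧
    (∀ i, ∃ d ≤ -(α / t ^ q) * ‖x' t‖ ^ 2, HasDerivAt (energy f x x' β p i) d t) ∧
    (∀ u i, (∀ j, f i (x t) - f i u ≤ f j (x t) - f j u) →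
      ⟪x t - u, x'' t⟫_ℝ ≤ -(α / t ^ q) * ⟪x t - u, x' t⟫_ℝ - (f i (x t) - f i u)
        - β / t ^ p * ⟪x t - u, x t⟫_ℝ) := by
  filter_upwards [T.hM, T.hx''] with t hM hx'' ht
  obtain ⟨hmem, hmin⟩ := hM ht
  have hx2 := hx'' ht
  have htpos := T.ht₀.trans_le ht
  have hγ : 0 < α / t ^ q := div_pos T.hα (Real.rpow_pos_of_pos htpos q)
  refine ⟨hx2, fun i => ?_, fun u i hi => ?_⟩
  · have hproj := inner_le_of_min_norm hγ hmem hmin (subset_convexHull ℝ _ ⟨i, rfl⟩)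
    have hx1 := T.hx t ht
    have hd := ((T.hasDerivAt_f i ht).fun_add ((hasDerivAt_tik β (p := p) htpos).fun_mul
      (hx1.inner ℝ hx1))).fun_add ((hx2.inner ℝ hx2).const_mul (1 / 2))
    have hneg : 0 ≤ β / 2 * p * t ^ (-p - 1) * ⟪x t, x t⟫_ℝ := by
      have := T.hβ; have := T.hp
      have := Real.rpow_pos_of_pos htpos (-p - 1)
      have := real_inner_self_nonneg (x := x t)
      positivity
    have hE : energy f x x' β p i = fun s => f i (x s) + β / (2 * s ^ p) * ⟪x s, x s⟫_ℝ
        + (1 / 2) * ⟪x' s, x' s⟫_ℝ := by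
      funext s; simp only [energy, real_inner_self_eq_norm_sq]
    rw [hE]
    refine ⟨_, ?_, hd⟩
    simp only [inner_add_left, real_inner_smul_left] at hproj
    have e : β / (2 * t ^ p) * (⟪x t, x' t⟫_ℝ + ⟪x' t, x t⟫_ℝ) = β / t ^ p * ⟪x t, x' t⟫_ℝ := by
      rw [real_inner_comm (x t) (x' t)]; field_simp; ring
    have e3 := real_inner_comm (x'' t) (x' t)
    rw [e]
    linarith
  · obtain ⟨g, hg, hgeq⟩ := hmem
    have hgle : ⟪u - x t, g⟫_ℝ ≤ -(f i (x t) - f i u) := by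
      have hsub : convexHull ℝ (Set.range fun i => gradient (f i) (x t)) ⊆
          {g | ⟪u - x t, g⟫_ℝ ≤ -(f i (x t) - f i u)} := by
        refine convexHull_min ?_ (convex_halfSpace_le (innerSL ℝ (u - x t)).isLinear _)
        rintro _ ⟨j, rfl⟩
        have h1 := convex_gradient_le (T.hconv j) (T.hdiff j) (x t) u
        have h2 := hi j
        rw [Set.mem_ofPred_eq, real_inner_comm]
        linarith
      exact hsub hg
    have e : x'' t = -((α / t ^ q) • x' t) - (β / t ^ p) • x t - g := by
      simp only [neg_smul] at hgeq
      rw [← hgeq]; abel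
    have e2 : ⟪x t - u, g⟫_ℝ = -⟪u - x t, g⟫_ℝ := by rw [← inner_neg_left, neg_sub]
    rw [e]
    simp only [inner_sub_right, inner_neg_right, real_inner_smul_right, e2]
    linarith

lemma energy_antitone (T : IsTraj f x x' x'' t₀ α β q p) (i : Fin m) {a b : ℝ} (ha : t₀ ≤ a)
    (hab : a ≤ b) : energy f x x' β p i b ≤ energy f x x' β p i a := by
  have := barrier (m := 1) (g := fun _ => energy f x x' β p i) (C := energy f x x' β p i a) hab
    (fun _ => T.ac_energy i ha hab) 0 ?_
  · simpa using this
  · filter_upwards [T.ae_facts] with t ht htab j _ _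
    have h := ha.trans htab.1.le
    obtain ⟨d, hd, hd'⟩ := (ht h).2.1 i
    refine ⟨d, hd.trans ?_, hd'⟩
    have := div_pos T.hα (Real.rpow_pos_of_pos (T.ht₀.trans_le h) q)
    nlinarith [sq_nonneg ‖x' t‖]

end IsTraj
/-! ### The Lyapunov estimate -/

/-- The Lyapunov function
`t^{2q} (energy_i - f_i(u)) + (α/2) t^q ⟨x - u, ẋ⟩ + (α/2)(α - q t^{q-1}) ‖x - u‖² / 2`
attached to the objective `f i` and the reference point `u`. -/
noncomputable def lyapunov {m : ℕ} (f : Fin m → H → ℝ) (x x' : ℝ → H) (α β q p : ℝ) (u : H)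
    (i : Fin m) (s : ℝ) : ℝ :=
  (s ^ q) ^ 2 * (energy f x x' β p i s - f i u) + α / 2 * (s ^ q * ⟪x s - u, x' s⟫_ℝ)
    + α / 2 * (α - q * s ^ (q - 1)) * (1 / 2 * ⟪x s - u, x s - u⟫_ℝ)

/-- The algebra behind the Lyapunov estimate. Here `P = t^q`, `r = t^{q-1}`, `k = t^{q-2}`,
`ε = β/t^p`, `e` is the energy gap and `e'` its derivative, `v2 = ‖ẋ‖`, `g = ⟨x - u, ẋ⟩`, `h2` is the
derivative of `g`, and `h = ‖x - u‖²/2`. The left-hand side of the conclusion is the derivative of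
the Lyapunov function, and the strict inequality says that this function exceeds the threshold. -/
lemma lyapunov_arith {α β R D P r k q ε e e' v2 g h h2 : ℝ} (hα : 0 < α) (hP : 0 < P)
    (hq0 : 0 < q) (hq1 : q < 1) (hk : 0 ≤ k) (hPk : P * k ≤ 1) (hqr0 : 0 ≤ q * r)
    (hqr : q * r ≤ α / 8)
    (hε : P ^ 2 * ε ≤ β) (he : 0 ≤ e) (he' : P * e' ≤ -α * v2 ^ 2) (hg : |g| ≤ D * v2)
    (hh0 : 0 ≤ h) (hh : h ≤ D ^ 2 / 2)
    (hh2 : P * h2 ≤ P * (3 / 2 * v2 ^ 2 - e + ε / 2 * R ^ 2) - α * g)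
    (hE : α ^ 2 * D ^ 2 * (5 / 16) + β * R ^ 2 + D ^ 2 <
      P ^ 2 * e + α / 2 * P * g + α / 2 * (α - q * r) * h) :
    2 * P * (q * r) * e + P ^ 2 * e' + α / 2 * (q * r * g + P * h2)
      + α / 2 * (q * (1 - q) * k) * h + α / 2 * (α - q * r) * g ≤ 0 := by
  obtain ⟨d, hd⟩ : ∃ d, d = 2 * P * (q * r) * e + P ^ 2 * e' + α / 2 * (q * r * g + P * h2)
      + α / 2 * (q * (1 - q) * k) * h + α / 2 * (α - q * r) * g := ⟨_, rfl⟩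
  rw [← hd]
  have a1 : P * (q * r) * e ≤ P * (α / 8) * e := by gcongr
  have a2 : P ^ 2 * e' ≤ P * (-α * v2 ^ 2) := by
    rw [sq, mul_assoc]; gcongr
  have a3 : d ≤ α / 4 * P * e - α / 2 * P * e - α / 4 * P * v2 ^ 2 + α / 4 * P * ε * R ^ 2
      + α / 2 * (q * (1 - q) * k) * h := by
    have : α / 2 * (P * h2) ≤ α / 2 * (P * (3 / 2 * v2 ^ 2 - e + ε / 2 * R ^ 2) - α * g) := by
      gcongr
    rw [hd]
    linarith
  have a4 : P * (q * (1 - q) * k) * h ≤ 1 * (D ^ 2 / 2) := by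
    have h1 : q * (1 - q) ≤ 1 := by nlinarith
    have h2 : P * (q * (1 - q) * k) ≤ 1 := by
      have : q * (1 - q) * (P * k) ≤ 1 * 1 := by gcongr
      linarith
    gcongr
  have a5 : P ^ 2 * ε * R ^ 2 ≤ β * R ^ 2 := by gcongr
  have a6 : α / 2 * (P * g) ≤ P ^ 2 * v2 ^ 2 + α ^ 2 * D ^ 2 / 16 := by
    have : P * g ≤ P * (D * v2) := by gcongr; exact (le_abs_self _).trans hg
    have h1 := mul_le_mul_of_nonneg_left this (by positivity : 0 ≤ α / 2)
    have h2 := sq_nonneg (P * v2 - α * D / 4)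
    linarith
  have a7 : α / 2 * (α - q * r) * h ≤ α / 2 * α * (D ^ 2 / 2) := by
    have : (α - q * r) * h ≤ α * (D ^ 2 / 2) := by
      have : α - q * r ≤ α := by linarith
      gcongr
    have h1 := mul_le_mul_of_nonneg_left this (by positivity : 0 ≤ α / 2)
    linarith
  -- `a6` and `a7` turn the threshold for the Lyapunov function into one for the energy terms
  have a8 : 0 ≤ P ^ 2 * e + P ^ 2 * v2 ^ 2 - (β * R ^ 2 + D ^ 2) := by linarith
  have a9 : P * d ≤ -(α / 4) * (P ^ 2 * e + P ^ 2 * v2 ^ 2 - (β * R ^ 2 + D ^ 2)) := by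
    have : P * d ≤ P * (α / 4 * P * e - α / 2 * P * e - α / 4 * P * v2 ^ 2 + α / 4 * P * ε * R ^ 2
      + α / 2 * (q * (1 - q) * k) * h) := by gcongr
    have h4 := mul_le_mul_of_nonneg_left a4 (by positivity : 0 ≤ α / 2)
    have h5 := mul_le_mul_of_nonneg_left a5 (by positivity : 0 ≤ α / 4)
    linarith
  have : P * d ≤ 0 := by
    have := mul_nonneg (by positivity : 0 ≤ α / 4) a8
    linarith
  exact nonpos_of_mul_nonpos_right this hP

namespace IsTraj

variable {m : ℕ} {f : Fin m → H → ℝ} {x x' x'' : ℝ → H} {t₀ α β q p : ℝ}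

lemma ac_lyapunov (T : IsTraj f x x' x'' t₀ α β q p) (u : H) (i : Fin m) {a b : ℝ} (ha : t₀ ≤ a)
    (hab : a ≤ b) : AbsolutelyContinuousOnInterval (lyapunov f x x' α β q p u i) a b := by
  have hpos : ∀ s ∈ Set.Icc a b, 0 < s := fun s hs => T.ht₀.trans_le (ha.trans hs.1)
  have hpowac : ∀ r : ℝ, AbsolutelyContinuousOnInterval (fun s : ℝ => s ^ r) a b := fun r =>
    ac_of_hasDerivAt hab (fun s hs => Real.hasDerivAt_rpow_const (Or.inl (hpos s hs).ne'))
      (continuousOn_const.mul fun s hs => (Real.continuousAt_rpow_const s _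
        (Or.inl (hpos s hs).ne')).continuousWithinAt)
  have hxuac : AbsolutelyContinuousOnInterval (fun s => x s - u) a b :=
    (T.ac_x ha hab).fun_sub (ac_const hab u)
  have h0 : AbsolutelyContinuousOnInterval (fun s => (s ^ q) ^ 2) a b := by
    simpa only [sq] using (hpowac q).fun_mul (hpowac q)
  have h1 := h0.fun_mul ((T.ac_energy i ha hab).fun_sub (ac_const hab (f i u)))
  have h2 := ((hpowac q).fun_mul (ac_inner hxuac (T.ac_x' ha hab))).const_mul (α / 2)
  have h3 := (((ac_const hab α).fun_sub ((hpowac (q - 1)).const_mul q)).const_mul (α / 2)).fun_mul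
    ((ac_inner hxuac hxuac).const_mul (1 / 2))
  exact (h1.fun_add h2).fun_add h3

/-- At a time where the differential inequalities of `ae_facts` hold, the Lyapunov function of a
minimal index does not increase as long as it exceeds the threshold. -/
lemma lyapunov_deriv_nonpos (T : IsTraj f x x' x'' t₀ α β q p) (hq0 : 0 < q) (hq1 : q < 1)
    (h2q : 2 * q < p) {s R D : ℝ} {u : H} {i : Fin m} (hs0 : t₀ ≤ s) (hs1 : 1 ≤ s)
    (hs : HasDerivAt x' (x'' s) s ∧
      (∀ i, ∃ d ≤ -(α / s ^ q) * ‖x' s‖ ^ 2, HasDerivAt (energy f x x' β p i) d s) ∧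
      (∀ u i, (∀ j, f i (x s) - f i u ≤ f j (x s) - f j u) →
        ⟪x s - u, x'' s⟫_ℝ ≤ -(α / s ^ q) * ⟪x s - u, x' s⟫_ℝ - (f i (x s) - f i u)
          - β / s ^ p * ⟪x s - u, x s⟫_ℝ))
    (hu : ‖u‖ ≤ R) (hqr : q * s ^ (q - 1) ≤ α / 8) (hxu : ‖x s - u‖ ≤ D)
    (he0 : 0 ≤ energy f x x' β p i s - f i u)
    (hmin : ∀ k, lyapunov f x x' α β q p u i s ≤ lyapunov f x x' α β q p u k s)
    (hC : α ^ 2 * D ^ 2 * (5 / 16) + β * R ^ 2 + D ^ 2 < lyapunov f x x' α β q p u i s) :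
    ∃ d ≤ 0, HasDerivAt (lyapunov f x x' α β q p u i) d s := by
  have hα := T.hα
  have hβ := T.hβ
  have hin : |⟪x s - u, x' s⟫_ℝ| ≤ D * ‖x' s‖ :=
    (abs_real_inner_le_norm _ _).trans (by gcongr)
  have hh : 1 / 2 * ⟪x s - u, x s - u⟫_ℝ ≤ D ^ 2 / 2 := by
    rw [real_inner_self_eq_norm_sq]
    have := pow_le_pow_left₀ (norm_nonneg _) hxu 2
    linarith
  have hh0 : 0 ≤ 1 / 2 * ⟪x s - u, x s - u⟫_ℝ := by
    have := real_inner_self_nonneg (x := x s - u)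
    positivity
  have hspos : 0 < s := by linarith
  obtain ⟨hx2, hen, hacc⟩ := hs
  obtain ⟨e', he', hde⟩ := hen i
  have hP : 0 < s ^ q := Real.rpow_pos_of_pos hspos q
  have hdP : HasDerivAt (fun s : ℝ => s ^ q) (q * s ^ (q - 1)) s :=
    Real.hasDerivAt_rpow_const (Or.inl hspos.ne')
  have hdr : HasDerivAt (fun s : ℝ => s ^ (q - 1)) ((q - 1) * s ^ (q - 1 - 1)) s :=
    Real.hasDerivAt_rpow_const (Or.inl hspos.ne')
  have hdx : HasDerivAt (fun s => x s - u) (x' s) s := (T.hx s hs0).sub_const u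
  have hd := (((hdP.fun_pow 2).fun_mul (hde.sub_const (f i u))).fun_add
    ((hdP.fun_mul (hdx.inner ℝ hx2)).const_mul (α / 2))).fun_add
    ((((hasDerivAt_const s α).fun_sub (hdr.const_mul q)).const_mul (α / 2)).fun_mul
      ((hdx.inner ℝ hdx).const_mul (1 / 2)))
  refine ⟨_, ?_, hd⟩
  -- the index minimising `Λ` also minimises the objective gaps
  have hmin' : ∀ k, f i (x s) - f i u ≤ f k (x s) - f k u := by
    intro k
    have := hmin k
    simp only [lyapunov, energy, add_le_add_iff_right] at this
    have := le_of_mul_le_mul_left this (by positivity)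
    linarith
  have hA := hacc u i hmin'
  have hε : (s ^ q) ^ 2 * (β / s ^ p) ≤ β := by
    rw [← Real.rpow_natCast, ← Real.rpow_mul hspos.le, mul_div_assoc', mul_comm, mul_div_assoc,
      ← Real.rpow_sub hspos]
    have : s ^ (q * (2 : ℕ) - p) ≤ 1 :=
      Real.rpow_le_one_of_one_le_of_nonpos hs1 (by push_cast; linarith)
    nlinarith
  have hPk : s ^ q * s ^ (q - 1 - 1) ≤ 1 := by
    rw [← Real.rpow_add hspos]
    exact Real.rpow_le_one_of_one_le_of_nonpos hs1 (by linarith)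
  have hr : 0 < s ^ (q - 1) := Real.rpow_pos_of_pos hspos _
  have hk : 0 < s ^ (q - 1 - 1) := Real.rpow_pos_of_pos hspos _
  have key := lyapunov_arith (α := α) (β := β) (R := R) (D := D) (P := s ^ q) (r := s ^ (q - 1))
    (k := s ^ (q - 1 - 1)) (q := q) (ε := β / s ^ p) (e := energy f x x' β p i s - f i u)
    (e' := e') (v2 := ‖x' s‖) (g := ⟪x s - u, x' s⟫_ℝ) (h := 1 / 2 * ⟪x s - u, x s - u⟫_ℝ)
    (h2 := ‖x' s‖ ^ 2 + ⟪x s - u, x'' s⟫_ℝ) hα hP hq0 hq1 hk.le hPk (by positivity)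
    hqr hε he0 ?_ hin hh0
    hh ?_ ?_
  · have e1 := real_inner_comm (x s - u) (x' s)
    have e2 := real_inner_self_eq_norm_sq (x' s)
    have e3 : (s ^ q) ^ (2 - 1) = s ^ q := by norm_num
    rw [e1, e2, e3]
    push_cast
    linarith
  · have : s ^ q * e' ≤ s ^ q * (-(α / s ^ q) * ‖x' s‖ ^ 2) := by gcongr
    refine this.trans (le_of_eq ?_)
    field_simp
  · have hin2 : -(β / s ^ p * ⟪x s - u, x s⟫_ℝ) ≤ β / s ^ p / 2 * (R ^ 2 - ‖x s‖ ^ 2) := by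
      have hε0 : 0 < β / s ^ p := div_pos hβ (Real.rpow_pos_of_pos hspos p)
      have h1 : ⟪x s - u, x s⟫_ℝ = 1 / 2 * (‖x s‖ ^ 2 + ‖x s - u‖ ^ 2 - ‖u‖ ^ 2) := by
        have := norm_sub_sq_real (x s) u
        rw [inner_sub_left, real_inner_self_eq_norm_sq, real_inner_comm]
        linarith
      have h2 := pow_le_pow_left₀ (norm_nonneg _) hu 2
      have h3 := sq_nonneg ‖x s - u‖
      rw [h1]
      nlinarith
    have e1 : s ^ q * (-(α / s ^ q) * ⟪x s - u, x' s⟫_ℝ) = -α * ⟪x s - u, x' s⟫_ℝ := by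
      field_simp
    have e2 : β / (2 * s ^ p) = β / s ^ p / 2 := by field_simp
    have h4 : ⟪x s - u, x'' s⟫_ℝ ≤ -(α / s ^ q) * ⟪x s - u, x' s⟫_ℝ
        + (1 / 2 * ‖x' s‖ ^ 2 - (energy f x x' β p i s - f i u) + β / s ^ p / 2 * R ^ 2) := by
      simp only [energy, e2]
      linarith
    have h5 := mul_le_mul_of_nonneg_left h4 hP.le
    rw [mul_add, e1] at h5
    linarith
  · simp only [lyapunov] at hC
    linarith

/-- The rate, with constants uniform over reference points `u` in a ball. The reference point may be
chosen depending on the final time `t`; the assumption on the gaps at time `t` propagates to earlier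
times because the energies decrease. -/
lemma rate (T : IsTraj f x x' x'' t₀ α β q p) (hm : 0 < m) (hq0 : 0 < q) (hq1 : q < 1)
    (h2q : 2 * q < p) {M R : ℝ} (hM : ∀ t, t₀ ≤ t → ‖x t‖ ≤ M) :
    ∃ C : ℝ, 0 ≤ C ∧ ∃ T₁ : ℝ, t₀ ≤ T₁ ∧ ∀ t, T₁ ≤ t → ∀ u : H, ‖u‖ ≤ R →
      (∀ i, f i u ≤ f i (x t) + β / (2 * t ^ p) * ‖x t‖ ^ 2) →
      ∃ i, f i (x t) - f i u + β / (2 * t ^ p) * ‖x t‖ ^ 2 + 1 / 4 * ‖x' t‖ ^ 2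
        ≤ C * t ^ (-(2 * q)) := by
  have hα := T.hα
  have hβ := T.hβ
  obtain ⟨T₁, hT₁0, hT₁1, hT₁⟩ : ∃ T₁, t₀ ≤ T₁ ∧ 1 ≤ T₁ ∧
      ∀ t, T₁ ≤ t → q * t ^ (q - 1) ≤ α / 8 := by
    have h := (tendsto_rpow_neg_atTop (y := 1 - q) (by linarith)).const_mul q
    rw [mul_zero] at h
    obtain ⟨A, hA⟩ := eventually_atTop.1 (h.eventually_le_const (show (0:ℝ) < α / 8 by positivity))
    refine ⟨max t₀ (max 1 A), le_max_left _ _, (le_max_left _ _).trans (le_max_right _ _), ?_⟩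
    intro t ht
    have := hA t (((le_max_right _ _).trans (le_max_right _ _)).trans ht)
    rwa [neg_sub] at this
  set D := M + R with hD
  set j : Fin m := ⟨0, hm⟩
  set P₁ := T₁ ^ q with hP₁
  set C₁ := P₁ ^ 2 * (‖gradient (f j) (x T₁)‖ * D + β / (2 * T₁ ^ p) * ‖x T₁‖ ^ 2
    + (1 / 2) * ‖x' T₁‖ ^ 2) + α / 2 * P₁ * (D * ‖x' T₁‖) + α / 2 * α * (D ^ 2 / 2) with hC₁
  set C₀ := α ^ 2 * D ^ 2 * (5 / 16) + β * R ^ 2 + D ^ 2 with hC₀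
  have hC₀0 : 0 ≤ C₀ := by positivity
  refine ⟨max C₁ C₀ + α ^ 2 * D ^ 2 / 4, by positivity, T₁, hT₁0, fun t ht u hu hfu => ?_⟩
  have hxu : ∀ s, t₀ ≤ s → ‖x s - u‖ ≤ D := fun s hs =>
    (norm_sub_le _ _).trans (add_le_add (hM s hs) hu)
  have hD0 : 0 ≤ D := (norm_nonneg _).trans (hxu t₀ le_rfl)
  have hin : ∀ s, t₀ ≤ s → |⟪x s - u, x' s⟫_ℝ| ≤ D * ‖x' s‖ := fun s hs =>
    (abs_real_inner_le_norm _ _).trans (by gcongr; exact hxu s hs)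
  have hh : ∀ s, t₀ ≤ s → 1 / 2 * ⟪x s - u, x s - u⟫_ℝ ≤ D ^ 2 / 2 := fun s hs => by
    rw [real_inner_self_eq_norm_sq]
    have := pow_le_pow_left₀ (norm_nonneg _) (hxu s hs) 2
    linarith
  have hh0 : ∀ s, 0 ≤ 1 / 2 * ⟪x s - u, x s - u⟫_ℝ := fun s => by
    have := real_inner_self_nonneg (x := x s - u)
    positivity
  have he0 : ∀ s, t₀ ≤ s → s ≤ t → ∀ i, 0 ≤ energy f x x' β p i s - f i u := by
    intro s hs hst i
    have h1 := T.energy_antitone i hs hst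
    have h2 := hfu i
    have h3 := sq_nonneg ‖x' t‖
    simp only [energy] at h1 ⊢
    linarith
  set Λ := lyapunov f x x' α β q p u with hΛ
  obtain ⟨i, hi⟩ := barrier (C := C₀) ht (fun i => T.ac_lyapunov u i hT₁0 ht) j (by
    filter_upwards [T.ae_facts] with s hs hst i hmin hC
    have hs0 : t₀ ≤ s := hT₁0.trans hst.1.le
    exact T.lyapunov_deriv_nonpos hq0 hq1 h2q hs0 (hT₁1.trans hst.1.le) (hs hs0) hu
      (hT₁ s hst.1.le) (hxu s hs0) (he0 s hs0 hst.2.le i) hmin hC)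
  refine ⟨i, ?_⟩
  -- the initial value is bounded uniformly in `u`, since convexity bounds `f j u` from below
  have hΛ₁ : Λ j T₁ ≤ C₁ := by
    have h1 := convex_gradient_le (T.hconv j) (T.hdiff j) (x T₁) u
    have h2 : -(‖gradient (f j) (x T₁)‖ * D) ≤ ⟪gradient (f j) (x T₁), u - x T₁⟫_ℝ := by
      have h3 := (abs_le.1 (abs_real_inner_le_norm (gradient (f j) (x T₁)) (u - x T₁))).1
      have h4 : ‖gradient (f j) (x T₁)‖ * ‖u - x T₁‖ ≤ ‖gradient (f j) (x T₁)‖ * D := by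
        gcongr; rw [norm_sub_rev]; exact hxu _ hT₁0
      linarith
    have h5 : ⟪x T₁ - u, x' T₁⟫_ℝ ≤ D * ‖x' T₁‖ := (le_abs_self _).trans (hin _ hT₁0)
    have hr : 0 ≤ q * T₁ ^ (q - 1) := by positivity
    have h6 : (α - q * T₁ ^ (q - 1)) * (1 / 2 * ⟪x T₁ - u, x T₁ - u⟫_ℝ) ≤ α * (D ^ 2 / 2) := by
      have h7 := hh0 T₁
      have h8 := hh T₁ hT₁0
      have h9 : α - q * T₁ ^ (q - 1) ≤ α := by linarith
      gcongr
    have h7 : P₁ ^ 2 * (energy f x x' β p j T₁ - f j u) ≤ P₁ ^ 2 *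
        (‖gradient (f j) (x T₁)‖ * D + β / (2 * T₁ ^ p) * ‖x T₁‖ ^ 2
          + (1 / 2) * ‖x' T₁‖ ^ 2) := by
      gcongr
      simp only [energy]
      linarith
    have hP₁0 : 0 ≤ P₁ := by positivity
    have h8 : P₁ * ⟪x T₁ - u, x' T₁⟫_ℝ ≤ P₁ * (D * ‖x' T₁‖) := by gcongr
    have h9 := mul_le_mul_of_nonneg_left h8 (by positivity : 0 ≤ α / 2)
    have h10 := mul_le_mul_of_nonneg_left h6 (by positivity : 0 ≤ α / 2)
    simp only [hΛ, lyapunov, ← hP₁, hC₁]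
    linarith
  have htpos : 0 < t := by linarith
  have hP : 0 < t ^ q := Real.rpow_pos_of_pos htpos q
  have hi2 : Λ i t ≤ max C₁ C₀ := hi.trans (max_le_max_right _ hΛ₁)
  have ht0 : t₀ ≤ t := hT₁0.trans ht
  have h1 : -(t ^ q * (D * ‖x' t‖)) ≤ t ^ q * ⟪x t - u, x' t⟫_ℝ := by
    rw [← mul_neg]; gcongr; exact (abs_le.1 (hin t ht0)).1
  have h2 : 0 ≤ α / 2 * (α - q * t ^ (q - 1)) * (1 / 2 * ⟪x t - u, x t - u⟫_ℝ) := by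
    have h3 := hh0 t
    have h4 : 0 ≤ α - q * t ^ (q - 1) := by linarith [hT₁ t ht]
    positivity
  have h3 : (t ^ q) ^ 2 * (f i (x t) - f i u + β / (2 * t ^ p) * ‖x t‖ ^ 2 + 1 / 4 * ‖x' t‖ ^ 2)
      ≤ max C₁ C₀ + α ^ 2 * D ^ 2 / 4 := by
    simp only [hΛ, lyapunov, energy] at hi2
    have h4 := mul_le_mul_of_nonneg_left h1 (by positivity : 0 ≤ α / 2)
    have h5 := sq_nonneg (t ^ q * ‖x' t‖ / 2 - α * D / 2)
    linarith
  have e : t ^ (-(2 * q)) = ((t ^ q) ^ 2)⁻¹ := by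
    rw [Real.rpow_neg htpos.le, ← Real.rpow_natCast, ← Real.rpow_mul htpos.le]
    congr 2; push_cast; ring
  rw [e, ← div_eq_mul_inv, le_div_iff₀ (by positivity), mul_comm]
  exact h3

end IsTraj
end Trajectory

/-- For `p ∈ (0,2]`, `q ∈ (0,1)` with `2q < p`, a bounded trajectory solution
`x` of (MTRIGS), under (A3) and nonemptiness of `S(F(x(t)))`, as `t → ∞`:
(a) `min_i (f_{t,i}(x(t)) − f_{t,i}(z(t))) = O(t^{−2q})`; (b) `φ(x(t)) ≤ C t^{−2q}` eventually;
(c) `‖x(t) − z(t)‖ = O(1)`; (d) `‖ẋ(t)‖ = O(t^{−q})`. -/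
theorem stmt_14
    {H : Type*} [NormedAddCommGroup H] [InnerProductSpace ℝ H] [CompleteSpace H]
    {m : ℕ} (hm : 0 < m) (f : Fin m → H → ℝ)
    (hconv : ∀ i, ConvexOn ℝ Set.univ (f i))
    (hdiff : ∀ i, Differentiable ℝ (f i))
    (hlip : ∀ i, ∃ L : ℝ≥0, LipschitzWith L (gradient (f i)))
    (t₀ α β q p : ℝ) (ht₀ : 0 < t₀) (hα : 0 < α) (hβ : 0 < β)
    (hq : q ∈ Set.Ioo (0:ℝ) 1) (hp : p ∈ Set.Ioc (0:ℝ) 2) (h2q : 2 * q < p)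
    (x x' x'' : ℝ → H)
    (hx : ∀ t ∈ Set.Ici t₀, HasDerivAt x (x' t) t)
    (hx'c : ContinuousOn x' (Set.Ici t₀))
    (hx''m : StronglyMeasurable x'')
    (hx'int : ∀ t ∈ Set.Ici t₀, x' t = x' t₀ + ∫ s in t₀..t, x'' s)
    (hx'' : ∀ᵐ t ∂(volume.restrict (Set.Ici t₀)), HasDerivAt x' (x'' t) t)
    (hMTRIGS : ∀ᵐ t ∂(volume.restrict (Set.Ici t₀)),
      ((-(α / t ^ q)) • x' t ∈
        (fun g => g + (β / t ^ p) • x t + x'' t) ''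
          (convexHull ℝ (Set.range fun i => gradient (f i) (x t)))) ∧
      (∀ w ∈ (fun g => g + (β / t ^ p) • x t + x'' t) ''
          (convexHull ℝ (Set.range fun i => gradient (f i) (x t))),
        ‖(α / t ^ q) • x' t‖ ≤ ‖w‖))
    (hbdd : ∃ M : ℝ, ∀ t ∈ Set.Ici t₀, ‖x t‖ ≤ M)
    (hS : ∀ t, t₀ ≤ t →
      ∃ u : H, ∀ y : H, (⨆ i, (f i u - f i (x t))) ≤ ⨆ i, (f i y - f i (x t)))
    (hA3a : ∀ w : H,
      (∀ i, f i w ≤ f i (x t₀)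
        + (β / (2 * t₀ ^ p) * ‖x t₀‖ ^ 2 + (1/2) * ‖x' t₀‖ ^ 2)) →
      ∃ u : H, (∀ i, f i u ≤ f i w) ∧ ¬ ∃ y : H, ∀ i, f i y < f i u)
    (hA3b : ∃ R : ℝ, 0 ≤ R ∧ ∀ y : H,
      ((∀ i, f i y ≤ f i (x t₀)
          + (β / (2 * t₀ ^ p) * ‖x t₀‖ ^ 2 + (1/2) * ‖x' t₀‖ ^ 2)) ∧
        ¬ ∃ u : H, ∀ i, f i u < f i y) →
      ∀ ε : ℝ, 0 < ε → ∃ z' : H, (∀ i, f i z' = f i y) ∧ ‖z'‖ ≤ R + ε)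
    (z : ℝ → H)
    (hz : ∀ t, t₀ ≤ t → ∀ u : H,
      (⨆ i, (f i (z t) - f i (x t))) + β / (2 * t ^ p) * ‖z t‖ ^ 2 ≤
        (⨆ i, (f i u - f i (x t))) + β / (2 * t ^ p) * ‖u‖ ^ 2)
    (φ : H → EReal)
    (hφ : ∀ y : H, φ y = ⨆ w : H, (((⨅ i, (f i y - f i w)) : ℝ) : EReal)) :
    (∃ C : ℝ, 0 ≤ C ∧ ∃ T : ℝ, t₀ ≤ T ∧ ∀ t, T ≤ t →
      |⨅ i, ((f i (x t) + β / (2 * t ^ p) * ‖x t‖ ^ 2)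
        - (f i (z t) + β / (2 * t ^ p) * ‖z t‖ ^ 2))| ≤ C * t ^ (-(2 * q))) ∧
    (∃ C : ℝ, 0 ≤ C ∧ ∃ T : ℝ, t₀ ≤ T ∧ ∀ t, T ≤ t →
      φ (x t) ≤ ((C * t ^ (-(2 * q)) : ℝ) : EReal)) ∧
    (∃ C : ℝ, 0 ≤ C ∧ ∃ T : ℝ, t₀ ≤ T ∧ ∀ t, T ≤ t → ‖x t - z t‖ ≤ C) ∧
    (∃ C : ℝ, 0 ≤ C ∧ ∃ T : ℝ, t₀ ≤ T ∧ ∀ t, T ≤ t → ‖x' t‖ ≤ C * t ^ (-q)) := by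
  obtain ⟨M, hM⟩ := hbdd
  obtain ⟨R, hR0, hR⟩ := hA3b
  have hq0 : 0 < q := hq.1
  have T : IsTraj f x x' x'' t₀ α β q p :=
    { hconv := hconv
      hdiff := hdiff
      hgc := fun i => (hlip i).choose_spec.continuous
      ht₀ := ht₀
      hα := hα
      hβ := hβ
      hp := hp.1
      hx := hx
      hx'c := hx'c
      hx''m := hx''m
      hx'int := hx'int
      hx'' := (ae_restrict_iff' measurableSet_Ici).1 hx''
      hM := (ae_restrict_iff' measurableSet_Ici).1 hMTRIGS }
  have : Nonempty (Fin m) := ⟨⟨0, hm⟩⟩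
  have hsup : ∀ (g : Fin m → ℝ) i, g i ≤ ⨆ i, g i := fun g i =>
    le_ciSup (Set.finite_range g).bddAbove i
  have hinf : ∀ (g : Fin m → ℝ) i, ⨅ i, g i ≤ g i := fun g i =>
    ciInf_le (Set.finite_range g).bddBelow i
  have hself : ∀ t, ⨆ i, (f i (x t) - f i (x t)) = 0 := fun t => by simp
  -- minimizers are weakly Pareto optimal and lie in the level set of (A3), so one of them is bounded
  have hv : ∀ t, t₀ ≤ t → ∃ v, ‖v‖ ≤ R + 1 ∧ (∀ i, f i v ≤ f i (x t)) ∧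
      ∀ y : H, (⨆ i, (f i v - f i (x t))) ≤ ⨆ i, (f i y - f i (x t)) := by
    intro t ht
    obtain ⟨u, hu⟩ := hS t ht
    have hux : ∀ i, f i u ≤ f i (x t) := fun i => by
      have h1 := hu (x t)
      rw [hself] at h1
      have h2 := hsup (fun i => f i u - f i (x t)) i
      linarith
    have hlevel : ∀ i, f i u ≤ f i (x t₀)
        + (β / (2 * t₀ ^ p) * ‖x t₀‖ ^ 2 + (1/2) * ‖x' t₀‖ ^ 2) := by
      intro i
      have h1 := T.energy_antitone i le_rfl ht
      have h2 := hux i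
      have h3 : 0 ≤ β / (2 * t ^ p) * ‖x t‖ ^ 2 := by
        have := Real.rpow_pos_of_pos (ht₀.trans_le ht) p
        positivity
      have h4 := sq_nonneg ‖x' t‖
      simp only [energy] at h1
      linarith
    have hpareto : ¬ ∃ y : H, ∀ i, f i y < f i u := by
      rintro ⟨y, hy⟩
      obtain ⟨i, hi⟩ := exists_eq_ciSup_of_finite (f := fun i => f i y - f i (x t))
      have h1 := hu y
      have h2 := hsup (fun i => f i u - f i (x t)) i
      have h3 := hy i
      linarith
    obtain ⟨v, hv1, hv2⟩ := hR u ⟨hlevel, hpareto⟩ 1 one_pos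
    exact ⟨v, hv2, fun i => (hv1 i).trans_le (hux i), by simpa only [hv1] using hu⟩
  have hzR : ∀ t, t₀ ≤ t → ‖z t‖ ≤ R + 1 := by
    intro t ht
    obtain ⟨v, hvR, -, hvS⟩ := hv t ht
    have h1 := hz t ht v
    have h2 := hvS (z t)
    have hε : 0 < β / (2 * t ^ p) := by
      have := Real.rpow_pos_of_pos (ht₀.trans_le ht) p
      positivity
    have h3 : ‖z t‖ ^ 2 ≤ ‖v‖ ^ 2 := le_of_mul_le_mul_left (by linarith) hε
    exact (pow_le_pow_iff_left₀ (norm_nonneg _) (norm_nonneg _) two_ne_zero).1 h3 |>.trans hvR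
  have hzx : ∀ t, t₀ ≤ t → ∀ i, f i (z t) + β / (2 * t ^ p) * ‖z t‖ ^ 2 ≤
      f i (x t) + β / (2 * t ^ p) * ‖x t‖ ^ 2 := by
    intro t ht i
    have h1 := hz t ht (x t)
    rw [hself] at h1
    have h2 := hsup (fun i => f i (z t) - f i (x t)) i
    linarith
  have hε : ∀ t (w : H), t₀ ≤ t → 0 ≤ β / (2 * t ^ p) * ‖w‖ ^ 2 := fun t w ht => by
    have := Real.rpow_pos_of_pos (ht₀.trans_le ht) p
    positivity
  obtain ⟨C, hC0, T₁, hT₁, hrate⟩ := T.rate (R := R + 1) hm hq0 hq.2 h2q hM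
  refine ⟨⟨C, hC0, T₁, hT₁, fun t ht => ?_⟩, ⟨C, hC0, T₁, hT₁, fun t ht => ?_⟩,
    ⟨M + (R + 1), ?_, t₀, le_rfl, fun t ht => ?_⟩,
    ⟨2 * √C, by positivity, T₁, hT₁, fun t ht => ?_⟩⟩
  · have ht0 := hT₁.trans ht
    obtain ⟨i, hi⟩ := hrate t ht (z t) (hzR t ht0) fun i => by
      linarith [hzx t ht0 i, hε t (z t) ht0]
    rw [abs_of_nonneg (le_ciInf fun i => by linarith [hzx t ht0 i])]
    refine (hinf _ i).trans ?_
    linarith [hε t (z t) ht0, sq_nonneg ‖x' t‖]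
  · have ht0 := hT₁.trans ht
    obtain ⟨v, hvR, hvx, hvS⟩ := hv t ht0
    obtain ⟨i, hi⟩ := hrate t ht v hvR fun i => by linarith [hvx i, hε t (x t) ht0]
    rw [hφ]
    refine iSup_le fun w => EReal.coe_le_coe_iff.2 ?_
    -- the worst objective for `w` bounds the infimum; minimality of `v` transfers it to `v`
    obtain ⟨k, hk⟩ := exists_eq_ciSup_of_finite (f := fun i => f i w - f i (x t))
    have h1 := hvS w
    have h2 := hinf (fun i => f i (x t) - f i w) k
    have h3 := hsup (fun i => f i v - f i (x t)) i
    linarith [hε t (x t) ht0, sq_nonneg ‖x' t‖]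
  · exact add_nonneg ((norm_nonneg _).trans (hM t₀ Set.self_mem_Ici)) (by linarith)
  · exact (norm_sub_le _ _).trans (add_le_add (hM t ht) (hzR t ht))
  · have ht0 := hT₁.trans ht
    have htpos := ht₀.trans_le ht0
    obtain ⟨i, hi⟩ := hrate t ht (z t) (hzR t ht0) fun i => by
      linarith [hzx t ht0 i, hε t (z t) ht0]
    have h1 : ‖x' t‖ ^ 2 ≤ 4 * (C * t ^ (-(2 * q))) := by
      linarith [hzx t ht0 i, hε t (z t) ht0]
    have h2 : t ^ (-(2 * q)) = (t ^ (-q)) ^ 2 := by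
      rw [← Real.rpow_natCast, ← Real.rpow_mul htpos.le]
      congr 1; push_cast; ring
    refine le_of_sq_le_sq ?_ (by positivity)
    rw [mul_pow, mul_pow, Real.sq_sqrt hC0]
    rw [h2] at h1
    linarith
end

section
/- Let q ∈ (0,1) and p ∈ (0,2] with p < q + 1. Let x be a trajectory solution of (MTRIGS). Assume S(F(x(t))) ≠ ∅ for every t ≥ t₀ and assume (A3). Then for every r with max(q, p − q) ≤ r < 1, as t → ∞: (a) min_{i=1,…,m}(f_{t,i}(x(t)) − f_{t,i}(z(t))) = O(t^{r−(p+1)}); (b) there exist C ≥ 0 and T ≥ t₀ with φ(x(t)) ≤ C·t^{−p} for all t ≥ T; (c) ‖x(t) − z(t)‖ = O(t^{(r−1)/2}); (d) ‖ẋ(t)‖ = O(t^{(r−(p+1))/2}). -/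
/-!
The proof compares the trajectory with a *fixed* centre `u`. Write `b t = β / (2 t^p)`,
`a t = α / t^q`, `ρ t = κ t^(-r)` and consider the energy

`E_u(t) = min_i (f_{t,i}(x t) - f_{t,i}(u)) + ½ ‖ρ t (x t - u) + ẋ t‖²`.

The minimal norm property in the system says that every `f_{t,i}` obeys the same descent inequality
along the trajectory, while `ẍ = -a ẋ - 2 b x - G` with `G` a convex combination of gradients; convexity
then yields `E_u' ≤ -ρ E_u - b' ‖u‖²` for large `t`; `energy_derivative_nonpos` is this inequality
combined with a supersolution `g`. The conditions `q ≤ r`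
and `p - q ≤ r` are exactly those under which the cross term `⟪x - u, ẋ⟫` can be absorbed, when `κ` is
small. As `r < 1`, the function `C t^(r - (p + 1))` is a supersolution of this inequality, uniformly for
`‖u‖ ≤ R`, and taking `C` large makes it dominate `E_u` at a fixed time `t₁` for all such `u`. Hence
`E_u(T) ≤ C T^(r - (p + 1))` for all `T ≥ t₁` (`EnergyTrajectory.fixed_center_decay`).

The constant does not depend on `u`, so `u = z T` may be chosen for each `T` separately, and the map `z`
is never differentiated. That `‖z T‖ ≤ R` holds follows from (A3) and the existence of minimizers of the
unregularized problem (`regularized_minimizer_bound`), the trajectory staying in the initial level set by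
dissipation of the total energy (`EnergyTrajectory.dissipation`).

With `u = z T` the first summand of `E_u(T)` is the regularized merit, nonnegative and at least
`b ‖x - z‖² / 2` by strong convexity. This gives (a) and (c), then (d) because `ρ² ‖x - z‖²` is bounded by
the merit, and (b) because removing the regularization costs at most `b R²`.
-/

open Filter Topology MeasureTheory
open scoped NNReal InnerProductSpace

/-! ### Convexity and absolute continuity -/

lemma convex_gradient_ineq {H : Type*} [NormedAddCommGroup H] [InnerProductSpace ℝ H]
    [CompleteSpace H] {f : H → ℝ} (hc : ConvexOn ℝ Set.univ f) (hd : Differentiable ℝ f) (x u : H) :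
    f x - f u ≤ ⟪x - u, gradient f x⟫_ℝ := by
  have hl : ConvexOn ℝ Set.univ (fun s : ℝ => f (x + s • (u - x))) := by
    have := hc.comp_affineMap (AffineMap.lineMap (k := ℝ) x u)
    simpa [Function.comp_def, AffineMap.lineMap_apply, add_comm] using this
  have hder : HasDerivAt (fun s : ℝ => f (x + s • (u - x))) ⟪gradient f x, u - x⟫_ℝ 0 := by
    have h1 : HasDerivAt (fun s : ℝ => x + s • (u - x)) (u - x) 0 := by
      simpa using ((hasDerivAt_id (0:ℝ)).smul_const (u - x)).const_add x
    have h2 : HasFDerivAt f (InnerProductSpace.toDual ℝ H (gradient f x)) (x + (0:ℝ) • (u - x)) := by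
      simpa using (hd x).hasGradientAt.hasFDerivAt
    have h3 := h2.comp_hasDerivAt (0:ℝ) h1
    rwa [InnerProductSpace.toDual_apply_apply] at h3
  have := hl.le_slope_of_hasDerivAt (Set.mem_univ 0) (Set.mem_univ 1) one_pos hder
  simp only [slope_def_field, one_smul, zero_smul, add_zero, sub_zero, div_one,
    add_sub_cancel] at this
  rw [real_inner_comm, ← neg_sub u x, inner_neg_right]
  linarith

/-- The projection inequality for `-(a • v)`, the element of least norm of
`convexHull S + c • x + w`, divided by `a`: every gradient `g` in `S` gives a descent estimate with
the same right-hand side. Membership itself gives the second-order equation for `w`. -/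
lemma steepest_descent_facts {H : Type*} [NormedAddCommGroup H] [InnerProductSpace ℝ H]
    {a c : ℝ} (ha : 0 < a) {x v w : H} {S : Set H}
    (hmem : (-a) • v ∈ (fun g => g + c • x + w) '' convexHull ℝ S)
    (hmin : ∀ k ∈ (fun g => g + c • x + w) '' convexHull ℝ S, ‖a • v‖ ≤ ‖k‖) :
    (∀ g ∈ S, ⟪g, v⟫_ℝ + c * ⟪x, v⟫_ℝ + ⟪v, w⟫_ℝ ≤ -a * ‖v‖ ^ 2) ∧
    ∃ G ∈ convexHull ℝ S, w = -(a • v) - c • x - G := by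
  constructor
  · intro g hg
    set K := (fun g => g + c • x + w) '' convexHull ℝ S with hK
    have hKc : Convex ℝ K := by
      have := (convex_convexHull ℝ S).translate (c • x + w)
      convert this using 1
      rw [hK]
      congr 1
      ext g
      abel
    have hne : Nonempty K := ⟨⟨_, hmem⟩⟩
    have heq : ‖(0:H) - (-a) • v‖ = ⨅ k : K, ‖(0:H) - k‖ := by
      apply le_antisymm
      · refine le_ciInf fun k => ?_
        simpa using hmin k k.2
      · exact ciInf_le ⟨0, by rintro _ ⟨k, rfl⟩; exact norm_nonneg _⟩ (⟨_, hmem⟩ : K)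
    have h1 := (norm_eq_iInf_iff_real_inner_le_zero hKc hmem).1 heq _
      ⟨g, subset_convexHull ℝ S hg, rfl⟩
    simp only [neg_smul, sub_neg_eq_add, zero_add, inner_add_right, 
      inner_smul_right] at h1
    rw [real_inner_comm v g, real_inner_comm v x]
    simp only [inner_smul_left, real_inner_self_eq_norm_sq, RCLike.conj_to_real] at h1
    have h2 : a * (⟪v, g⟫_ℝ + c * ⟪v, x⟫_ℝ + ⟪v, w⟫_ℝ + a * ‖v‖ ^ 2) ≤ 0 := by linarith
    have h3 := nonpos_of_mul_nonpos_right h2 ha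
    linarith
  · obtain ⟨G, hG, h⟩ := hmem
    refine ⟨G, hG, ?_⟩
    simp only [neg_smul] at h
    rw [← h]
    abel

/-- A monotonicity criterion for energies `A + ½‖y‖²` that only needs the derivative of `y` almost
everywhere: Lipschitz continuity of `y` makes the energy absolutely continuous. -/
lemma energy_antitone {H : Type*} [NormedAddCommGroup H] [InnerProductSpace ℝ H]
    {s T : ℝ} (hsT : s ≤ T) {A A' : ℝ → ℝ} {y y' : ℝ → H} {K : ℝ≥0}
    (hA : ∀ t ∈ Set.Icc s T, HasDerivAt A (A' t) t) (hA' : ContinuousOn A' (Set.Icc s T))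
    (hy : LipschitzOnWith K y (Set.Icc s T))
    (hae : ∀ᵐ t, t ∈ Set.Ioo s T → HasDerivAt y (y' t) t ∧ A' t + ⟪y t, y' t⟫_ℝ ≤ 0) :
    A T + 1 / 2 * ‖y T‖ ^ 2 ≤ A s + 1 / 2 * ‖y s‖ ^ 2 := by
  obtain ⟨C, hC⟩ := isCompact_Icc.exists_bound_of_continuousOn hA'
  have hA1 : LipschitzOnWith C.toNNReal A (Set.Icc s T) := by
    refine (convex_Icc s T).lipschitzOnWith_of_nnnorm_hasDerivWithin_le
      (fun t ht => (hA t ht).hasDerivWithinAt) fun t ht => ?_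
    rw [← NNReal.coe_le_coe, coe_nnnorm]
    exact (hC t ht).trans (Real.le_coe_toNNReal _)
  rw [← Set.uIcc_of_le hsT] at hA1 hy
  have hA2 := hA1.absolutelyContinuousOnInterval
  have hn := (lipschitzWith_one_norm.comp_lipschitzOnWith hy).absolutelyContinuousOnInterval
  have hE := hA2.add ((hn.mul hn).const_mul (1/2))
  have hint := hE.integral_deriv_eq_sub
  have hle : ∫ t in s..T, deriv (A + fun x ↦ 1 / 2 * (norm ∘ y * norm ∘ y) x) t ≤ 0 := by
    rw [intervalIntegral.integral_of_le hsT, integral_Ioc_eq_integral_Ioo]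
    refine integral_nonpos_of_ae ?_
    rw [Filter.EventuallyLE, ae_restrict_iff' measurableSet_Ioo]
    filter_upwards [hae] with t ht htm
    obtain ⟨h1, h2⟩ := ht htm
    have h3 := (hA t ⟨htm.1.le, htm.2.le⟩).add ((h1.norm_sq).const_mul (1/2))
    have h4 : deriv (A + fun x ↦ 1 / 2 * (norm ∘ y * norm ∘ y) x) t
        = A' t + 1 / 2 * (2 * ⟪y t, y' t⟫_ℝ) := by
      have hfun : (A + fun x ↦ 1 / 2 * (norm ∘ y * norm ∘ y) x)
          = A + fun r ↦ 1 / 2 * ‖y r‖ ^ 2 := by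
        ext r
        simp [sq]
      rw [hfun, h3.deriv]
    rw [h4]
    simpa using (by linarith : A' t + 1 / 2 * (2 * ⟪y t, y' t⟫_ℝ) ≤ 0)
  rw [hint] at hle
  simp only [Pi.add_apply, Pi.mul_apply, Function.comp] at hle
  nlinarith

/-- The essential bound on `w` makes it integrable on `[t₀, t]` for every `t` in `[t₀, T]`, so that
the integral in `hint` is a genuine one. -/
lemma velocity_lipschitz {H : Type*} [NormedAddCommGroup H] [InnerProductSpace ℝ H]
    {t₀ T M : ℝ} {v w : ℝ → H} (hw : StronglyMeasurable w)
    (hint : ∀ t ∈ Set.Ici t₀, v t = v t₀ + ∫ s in t₀..t, w s)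
    (hM : ∀ᵐ t, t ∈ Set.Icc t₀ T → ‖w t‖ ≤ M) :
    LipschitzOnWith M.toNNReal v (Set.Icc t₀ T) := by
  have hi : ∀ t ∈ Set.Icc t₀ T, IntervalIntegrable w volume t₀ t := by
    intro t ht
    rw [intervalIntegrable_iff_integrableOn_Ioc_of_le ht.1]
    refine Measure.integrableOn_of_bounded (M := M) (by simp) hw.aestronglyMeasurable ?_
    rw [ae_restrict_iff' measurableSet_Ioc]
    filter_upwards [hM] with s hs hs2
    exact hs ⟨hs2.1.le, hs2.2.trans ht.2⟩
  refine LipschitzOnWith.of_dist_le_mul fun a ha b hb => ?_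
  rw [dist_eq_norm, hint a ha.1, hint b hb.1, add_sub_add_left_eq_sub,
    intervalIntegral.integral_interval_sub_left (hi a ha) (hi b hb), Real.dist_eq]
  have hle := intervalIntegral.norm_integral_le_of_norm_le_const_ae (f := w) (a := b) (b := a)
    (C := M.toNNReal) ?_
  · exact hle
  · filter_upwards [hM] with s hs hs2
    refine (hs ?_).trans (Real.le_coe_toNNReal _)
    have := Set.uIoc_subset_uIcc.trans (Set.uIcc_subset_Icc hb ha) hs2
    exact this

/-! ### The differential inequality for the energy -/

/-- The estimate of `energy_derivative_nonpos`, with `n = ‖x - u‖`, `ν = ‖v‖`, `X = ‖x‖²`,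
`U = ‖u‖²` and the letters `k, dw, dx, dG, gv, xv, vw` standing for inner products. -/
lemma energy_derivative_scalar {a b b' ρ ρ' g g' W R gv xv vw dw dx dG k n ν X U : ℝ}
    (hgi : gv + 2 * b * xv + vw ≤ -a * ν ^ 2)
    (hdw : dw = -a * k - 2 * b * dx - dG)
    (hG : W + b * n ^ 2 ≤ dG + 2 * b * dx)
    (hpos : g < W + 1 / 2 * (ρ ^ 2 * n ^ 2 + 2 * (ρ * k) + ν ^ 2))
    (hk : |k| ≤ n * ν) (hX : 0 ≤ X) (hU : U ≤ R ^ 2)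
    (hρ : 0 < ρ) (hρa : ρ ≤ a / 4) (hρ'₀ : ρ' ≤ 0) (hρ' : -ρ' ≤ a * ρ)
    (hb : 3 * a * ρ ≤ b) (hb' : b' ≤ 0) (hg : -b' * R ^ 2 - g' - ρ * g ≤ 0) :
    gv + 2 * b * xv + b' * (X - U) - g' + (ρ * ρ' * n ^ 2 + ρ ^ 2 * k + ρ * dw + ρ' * k
      + ρ * ν ^ 2 + vw) ≤ 0 := by
  have ha : 0 < a := by linarith
  have e1 : ρ * dw ≤ -a * ρ * k - ρ * W - ρ * b * n ^ 2 := by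
    have := mul_le_mul_of_nonneg_left hG hρ.le
    rw [hdw]; linarith
  have e2 : -(ρ * W) ≤ -(ρ * g) + ρ / 2 * (ρ ^ 2 * n ^ 2 + 2 * (ρ * k) + ν ^ 2) := by
    have := mul_le_mul_of_nonneg_left hpos.le hρ.le
    linarith
  have hkabs : ρ * k ≤ ρ * (n * ν) := mul_le_mul_of_nonneg_left ((le_abs_self k).trans hk) hρ.le
  have e3 : ρ / 2 * (ρ ^ 2 * n ^ 2 + 2 * (ρ * k) + ν ^ 2) ≤ ρ * (ρ ^ 2 * n ^ 2 + ν ^ 2) := by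
    nlinarith [sq_nonneg (ρ * n - ν)]
  have hc : |ρ ^ 2 + ρ' - a * ρ| ≤ 2 * a * ρ := by
    rw [abs_le]
    constructor <;> nlinarith
  have e4 : (ρ ^ 2 + ρ' - a * ρ) * k ≤ a / 2 * ν ^ 2 + 2 * a * ρ ^ 2 * n ^ 2 := by
    calc (ρ ^ 2 + ρ' - a * ρ) * k ≤ |ρ ^ 2 + ρ' - a * ρ| * |k| := by
          rw [← abs_mul]; exact le_abs_self _
      _ ≤ 2 * a * ρ * (n * ν) := mul_le_mul hc hk (abs_nonneg _) (by positivity)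
      _ ≤ _ := by nlinarith [mul_nonneg ha.le (sq_nonneg (ν - 2 * ρ * n))]
  have e5 : b' * (X - U) ≤ -b' * R ^ 2 := by nlinarith
  have e6 : ρ * ρ' * n ^ 2 ≤ 0 :=
    mul_nonpos_of_nonpos_of_nonneg (mul_nonpos_of_nonneg_of_nonpos hρ.le hρ'₀) (sq_nonneg n)
  have e7 : (-a + 2 * ρ + a / 2) * ν ^ 2 ≤ 0 :=
    mul_nonpos_of_nonpos_of_nonneg (by linarith) (sq_nonneg _)
  have e8 : ρ * (ρ ^ 2 + 2 * a * ρ - b) * n ^ 2 ≤ 0 :=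
    mul_nonpos_of_nonpos_of_nonneg (mul_nonpos_of_nonneg_of_nonpos hρ.le (by nlinarith))
      (sq_nonneg n)
  linarith

/-- At a time where the energy `W + ½‖ρ (x - u) + v‖²` with fixed centre `u` exceeds `g`, the
derivative of each component of (energy minus `g`) is nonpositive. Here `a` is the damping, `b` half
the Tikhonov weight, `W` a lower bound for the regularized gaps, and primes denote time
derivatives. The cross term in `⟪x - u, v⟫` is absorbed by the damping and by the strong
convexity term, which is what `hρa` and `hb` are for. -/
lemma energy_derivative_nonpos {H : Type*} [NormedAddCommGroup H] [InnerProductSpace ℝ H]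
    {x v w u gi G : H} {a b b' ρ ρ' g g' W R : ℝ}
    (hgi : ⟪gi, v⟫_ℝ + 2 * b * ⟪x, v⟫_ℝ + ⟪v, w⟫_ℝ ≤ -a * ‖v‖ ^ 2)
    (hw : w = -(a • v) - (2 * b) • x - G)
    (hG : W + b * ‖x - u‖ ^ 2 ≤ ⟪x - u, G⟫_ℝ + 2 * b * ⟪x - u, x⟫_ℝ)
    (hpos : g < W + 1 / 2 * ‖ρ • (x - u) + v‖ ^ 2)
    (hρ : 0 < ρ) (hρa : ρ ≤ a / 4) (hρ'₀ : ρ' ≤ 0) (hρ' : -ρ' ≤ a * ρ)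
    (hb : 3 * a * ρ ≤ b) (hb' : b' ≤ 0) (hu : ‖u‖ ≤ R)
    (hg : -b' * R ^ 2 - g' - ρ * g ≤ 0) :
    (⟪gi, v⟫_ℝ + 2 * b * ⟪x, v⟫_ℝ + b' * (‖x‖ ^ 2 - ‖u‖ ^ 2) - g')
      + ⟪ρ • (x - u) + v, ρ' • (x - u) + ρ • v + w⟫_ℝ ≤ 0 := by
  have hdw : ⟪x - u, w⟫_ℝ = -a * ⟪x - u, v⟫_ℝ - 2 * b * ⟪x - u, x⟫_ℝ - ⟪x - u, G⟫_ℝ := by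
    rw [hw]
    simp only [inner_sub_right, inner_neg_right, inner_smul_right]
    ring
  rw [norm_add_sq_real, norm_smul, Real.norm_eq_abs, mul_pow, sq_abs, inner_smul_left,
    RCLike.conj_to_real] at hpos
  have hexp : ⟪ρ • (x - u) + v, ρ' • (x - u) + ρ • v + w⟫_ℝ
      = ρ * ρ' * ‖x - u‖ ^ 2 + ρ ^ 2 * ⟪x - u, v⟫_ℝ + ρ * ⟪x - u, w⟫_ℝ + ρ' * ⟪x - u, v⟫_ℝ
        + ρ * ‖v‖ ^ 2 + ⟪v, w⟫_ℝ := by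
    rw [inner_add_left, inner_add_right, inner_add_right, inner_add_right, inner_add_right,
      real_inner_smul_left, real_inner_smul_left, real_inner_smul_left, real_inner_smul_right,
      real_inner_smul_right, real_inner_smul_right, real_inner_smul_right,
      real_inner_self_eq_norm_sq, real_inner_self_eq_norm_sq, real_inner_comm (x - u) v]
    ring
  rw [hexp]
  exact energy_derivative_scalar hgi hdw hG hpos (abs_real_inner_le_norm _ _) (sq_nonneg _)
    (pow_le_pow_left₀ (norm_nonneg u) hu 2) hρ hρa hρ'₀ hρ' hb hb' hg

/-! ### The regularized minimizer -/

/-- Quadratic growth of the regularized problem at its minimizer, obtained by testing minimality at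
the midpoint of `x` and `z`; this costs a factor `2` against the optimal constant. -/
lemma regularized_gap_strong {H : Type*} [NormedAddCommGroup H] [InnerProductSpace ℝ H]
    {ι : Type*} [Finite ι] [Nonempty ι] {f : ι → H → ℝ} (hconv : ∀ i, ConvexOn ℝ Set.univ (f i))
    {b : ℝ} {x z : H}
    (hz : ∀ u : H, (⨆ i, (f i z - f i x)) + b * ‖z‖ ^ 2 ≤ (⨆ i, (f i u - f i x)) + b * ‖u‖ ^ 2) :
    b / 2 * ‖x - z‖ ^ 2 ≤ ⨅ i, ((f i x + b * ‖x‖ ^ 2) - (f i z + b * ‖z‖ ^ 2)) := by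
  refine le_ciInf fun j => ?_
  have hM : f j z - f j x ≤ ⨆ i, (f i z - f i x) :=
    le_ciSup (f := fun i => f i z - f i x) (Set.finite_range _).bddAbove j
  set M := ⨆ i, (f i z - f i x) with hMdef
  have hmid := hz ((1 / 2 : ℝ) • x + (1 / 2 : ℝ) • z)
  have hle : (⨆ i, (f i ((1 / 2 : ℝ) • x + (1 / 2 : ℝ) • z) - f i x)) ≤ 1 / 2 * M := by
    refine ciSup_le fun i => ?_
    have h1 := (hconv i).2 (Set.mem_univ x) (Set.mem_univ z) (by norm_num : (0:ℝ) ≤ 1 / 2)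
      (by norm_num : (0:ℝ) ≤ 1 / 2) (by norm_num)
    have h2 : f i z - f i x ≤ M :=
      le_ciSup (f := fun i => f i z - f i x) (Set.finite_range _).bddAbove i
    simp only [smul_eq_mul] at h1
    linarith
  have hsq : ‖(1 / 2 : ℝ) • x + (1 / 2 : ℝ) • z‖ ^ 2
      = 1 / 2 * ‖x‖ ^ 2 + 1 / 2 * ‖z‖ ^ 2 - 1 / 4 * ‖x - z‖ ^ 2 := by
    rw [norm_add_sq_real, norm_sub_sq_real, norm_smul, norm_smul, inner_smul_left,
      inner_smul_right]
    norm_num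
    ring
  rw [hsq] at hmid
  nlinarith

/-- A minimizer of `y ↦ max_i (f i y - f i x)` is weakly Pareto optimal and dominates `x`, so by `hP`
its value vector is attained in the ball of radius `R`. The regularized minimizer `z` cannot have a
larger norm than that point, which again minimizes the unregularized problem. -/
lemma regularized_minimizer_bound {H : Type*} [NormedAddCommGroup H]
    {ι : Type*} [Finite ι] [Nonempty ι] {f : ι → H → ℝ}
    {b R : ℝ} (hb : 0 < b) {x z : H} {c : ι → ℝ} (hxc : ∀ i, f i x ≤ c i)
    (hS : ∃ u : H, ∀ y : H, (⨆ i, (f i u - f i x)) ≤ ⨆ i, (f i y - f i x))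
    (hP : ∀ y : H, ((∀ i, f i y ≤ c i) ∧ ¬ ∃ u : H, ∀ i, f i u < f i y) →
      ∃ z' : H, (∀ i, f i z' = f i y) ∧ ‖z'‖ ≤ R)
    (hz : ∀ u : H, (⨆ i, (f i z - f i x)) + b * ‖z‖ ^ 2 ≤ (⨆ i, (f i u - f i x)) + b * ‖u‖ ^ 2) :
    ‖z‖ ≤ R ∧ ∃ s : H, ‖s‖ ≤ R ∧ ∀ y : H, (⨆ i, (f i s - f i x)) ≤ ⨆ i, (f i y - f i x) := by
  obtain ⟨s, hs⟩ := hS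
  have hbdd : ∀ y, BddAbove (Set.range fun i => f i y - f i x) :=
    fun y => (Set.finite_range _).bddAbove
  have hsx : ∀ i, f i s ≤ f i x := by
    intro i
    have h1 := hs x
    simp only [sub_self, ciSup_const] at h1
    linarith [le_ciSup (hbdd s) i]
  obtain ⟨s', hs', hsR⟩ := hP s ⟨fun i => (hsx i).trans (hxc i), by
    rintro ⟨y, hy⟩
    obtain ⟨i, hi⟩ := exists_eq_ciSup_of_finite (f := fun i => f i y - f i x)
    have := hs y
    rw [← hi] at this
    linarith [le_ciSup (hbdd s) i, hy i]⟩
  have hs2 : ∀ y : H, (⨆ i, (f i s' - f i x)) ≤ ⨆ i, (f i y - f i x) := by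
    simpa only [hs'] using hs
  refine ⟨?_, s', hsR, hs2⟩
  have h1 := hz s'
  have h2 := hs2 z
  have h3 : ‖z‖ ^ 2 ≤ ‖s'‖ ^ 2 := le_of_mul_le_mul_left (by linarith) hb
  exact (pow_le_pow_iff_left₀ (norm_nonneg _) (norm_nonneg _) two_ne_zero).1 h3 |>.trans hsR

/-! ### Energy estimates along a trajectory -/

/-- What the energy estimates use of a trajectory `x` with velocity `v` and acceleration `w` on
`[t₀, ∞)`: `v` is Lipschitz on compact intervals, and almost everywhere the second-order inclusion
holds with damping `a` and Tikhonov weight `2 * b`, both as an equation with some convex combination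
`G` of gradients (`ae_eq`) and as a descent inequality for each objective (`ae_descent`). -/
structure EnergyTrajectory {H : Type*} [NormedAddCommGroup H] [InnerProductSpace ℝ H]
    [CompleteSpace H] {ι : Type*} (f : ι → H → ℝ) (a b : ℝ → ℝ) (t₀ : ℝ) (x v w : ℝ → H) :
    Prop where
  hasDerivAt : ∀ t, t₀ ≤ t → HasDerivAt x (v t) t
  lipschitz : ∀ T, ∃ K : ℝ≥0, LipschitzOnWith K v (Set.Icc t₀ T)
  ae_deriv : ∀ᵐ t, t₀ ≤ t → HasDerivAt v (w t) t
  ae_descent : ∀ᵐ t, t₀ ≤ t → ∀ i,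
    ⟪gradient (f i) (x t), v t⟫_ℝ + 2 * b t * ⟪x t, v t⟫_ℝ + ⟪v t, w t⟫_ℝ ≤ -a t * ‖v t‖ ^ 2
  ae_eq : ∀ᵐ t, t₀ ≤ t → ∃ G ∈ convexHull ℝ (Set.range fun i => gradient (f i) (x t)),
    w t = -(a t • v t) - (2 * b t) • x t - G

namespace EnergyTrajectory

variable {H : Type*} [NormedAddCommGroup H] [InnerProductSpace ℝ H] [CompleteSpace H] {ι : Type*}
  {f : ι → H → ℝ} {a b b' : ℝ → ℝ} {t₀ t₁ : ℝ} {x v w : ℝ → H}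

lemma continuousOn (h : EnergyTrajectory f a b t₀ x v w) : ContinuousOn x (Set.Ici t₀) :=
  fun t ht => (h.hasDerivAt t ht).continuousAt.continuousWithinAt

/-- The gap of the `i`-th regularized objective `f i + b t * ‖·‖²` between the trajectory and a fixed
point `u`, minus the comparison function `g`. -/
def gap (f : ι → H → ℝ) (b g : ℝ → ℝ) (x : ℝ → H) (u : H) (i : ι) (t : ℝ) : ℝ :=
  f i (x t) + b t * ‖x t‖ ^ 2 - (f i u + b t * ‖u‖ ^ 2) - g t

/-- The time derivative of `gap`, where `b'`, `g'` and `v` are the derivatives of `b`, `g`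
and `x`. -/
noncomputable def gapDeriv (f : ι → H → ℝ) (b b' g' : ℝ → ℝ) (x v : ℝ → H) (u : H) (i : ι) (t : ℝ) : ℝ :=
  ⟪gradient (f i) (x t), v t⟫_ℝ + 2 * b t * ⟪x t, v t⟫_ℝ + b' t * (‖x t‖ ^ 2 - ‖u‖ ^ 2) - g' t

lemma gap_hasDerivAt (h : EnergyTrajectory f a b t₀ x v w) (hdiff : ∀ i, Differentiable ℝ (f i))
    {g g' : ℝ → ℝ} {t : ℝ} (ht : t₀ ≤ t) (hb : HasDerivAt b (b' t) t) (hg : HasDerivAt g (g' t) t)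
    (u : H) (i : ι) :
    HasDerivAt (gap f b g x u i) (gapDeriv f b b' g' x v u i t) t := by
  have hx := h.hasDerivAt t ht
  have h1 : HasDerivAt (fun t => f i (x t)) ⟪gradient (f i) (x t), v t⟫_ℝ t := by
    have h3 := ((hdiff i (x t)).hasGradientAt.hasFDerivAt).comp_hasDerivAt t hx
    rwa [InnerProductSpace.toDual_apply_apply] at h3
  have h2 := ((h1.add (hb.mul hx.norm_sq)).sub ((hb.mul_const (‖u‖ ^ 2)).const_add (f i u))).sub hg
  refine h2.congr_deriv ?_
  simp only [gapDeriv]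
  ring

lemma gapDeriv_continuousOn (h : EnergyTrajectory f a b t₀ x v w)
    (hgrad : ∀ i, Continuous (gradient (f i))) {g' : ℝ → ℝ} {s T : ℝ} (hs : t₀ ≤ s)
    (hb : ContinuousOn b (Set.Icc s T)) (hb' : ContinuousOn b' (Set.Icc s T))
    (hg' : ContinuousOn g' (Set.Icc s T)) (u : H) (i : ι) :
    ContinuousOn (gapDeriv f b b' g' x v u i) (Set.Icc s T) := by
  have hx : ContinuousOn x (Set.Icc s T) := h.continuousOn.mono fun t ht => hs.trans ht.1
  have hv : ContinuousOn v (Set.Icc s T) := by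
    obtain ⟨K, hK⟩ := h.lipschitz T
    exact hK.continuousOn.mono (Set.Icc_subset_Icc_left hs)
  have hG : ContinuousOn (fun t => gradient (f i) (x t)) (Set.Icc s T) :=
    (hgrad i).comp_continuousOn hx
  unfold gapDeriv
  exact (((hG.inner hv).add ((hb.const_mul 2).mul (hx.inner hv))).add
    (hb'.mul ((hx.norm.pow 2).sub continuousOn_const))).sub hg'

/-- The trajectory stays in the sublevel set determined by its initial total energy. -/
lemma dissipation (h : EnergyTrajectory f a b t₀ x v w) (hdiff : ∀ i, Differentiable ℝ (f i))
    (hgrad : ∀ i, Continuous (gradient (f i))) (ha : ∀ t, t₀ ≤ t → 0 ≤ a t)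
    (hb : ∀ t, t₀ ≤ t → HasDerivAt b (b' t) t) (hb'c : ContinuousOn b' (Set.Ici t₀))
    (hb₀ : ∀ t, t₀ ≤ t → 0 ≤ b t) (hb' : ∀ t, t₀ ≤ t → b' t ≤ 0) {T : ℝ} (hT : t₀ ≤ T) (i : ι) :
    f i (x T) ≤ f i (x t₀) + (b t₀ * ‖x t₀‖ ^ 2 + 1 / 2 * ‖v t₀‖ ^ 2) := by
  obtain ⟨K, hK⟩ := h.lipschitz T
  have hbc : ContinuousOn b (Set.Icc t₀ T) :=
    fun t ht => (hb t ht.1).continuousAt.continuousWithinAt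
  have key := energy_antitone hT (A := gap f b 0 x 0 i) (A' := gapDeriv f b b' 0 x v 0 i) (y' := w)
    (fun t ht => h.gap_hasDerivAt hdiff ht.1 (hb t ht.1) (by exact hasDerivAt_const t (0:ℝ)) 0 i)
    (h.gapDeriv_continuousOn hgrad le_rfl hbc (hb'c.mono fun t ht => ht.1)
      continuousOn_const 0 i) hK ?_
  · simp only [gap, Pi.zero_apply, norm_zero] at key
    nlinarith [mul_nonneg (hb₀ T hT) (sq_nonneg ‖x T‖), sq_nonneg ‖v T‖]
  · filter_upwards [h.ae_deriv, h.ae_descent] with t h1 h2 ht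
    refine ⟨h1 ht.1.le, ?_⟩
    have h3 := h2 ht.1.le i
    simp only [gapDeriv, Pi.zero_apply, norm_zero]
    nlinarith [mul_nonneg (ha t ht.1.le) (sq_nonneg ‖v t‖),
      mul_nonneg (neg_nonneg.2 (hb' t ht.1.le)) (sq_nonneg ‖x t‖)]

/-- The comparison principle. If the energy
`min_i (regularized gap) + ½‖ρ (x - u) + v‖²` with fixed centre `u` is at most `g` at time `t₁`, it
is so at every later time. The minimum over `i` is expressed by an existential quantifier; it is
never differentiated, since after the last time at which it is at most `g` every component
is nonincreasing. -/
lemma fixed_center_decay [Finite ι] [Nonempty ι] (h : EnergyTrajectory f a b t₀ x v w)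
    (hconv : ∀ i, ConvexOn ℝ Set.univ (f i))
    (hdiff : ∀ i, Differentiable ℝ (f i))
    (hgrad : ∀ i, Continuous (gradient (f i))) (ht₁ : t₀ ≤ t₁)
    {ρ ρ' g g' : ℝ → ℝ} {R : ℝ} {u : H} (hu : ‖u‖ ≤ R)
    (hb : ∀ t, t₁ ≤ t → HasDerivAt b (b' t) t) (hb'c : ContinuousOn b' (Set.Ici t₁))
    (hρ : ∀ t, t₁ ≤ t → HasDerivAt ρ (ρ' t) t) (hρ'c : ContinuousOn ρ' (Set.Ici t₁))
    (hg : ∀ t, t₁ ≤ t → HasDerivAt g (g' t) t) (hg'c : ContinuousOn g' (Set.Ici t₁))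
    (hb' : ∀ t, t₁ ≤ t → b' t ≤ 0)
    (hρ₀ : ∀ t, t₁ ≤ t → 0 < ρ t) (hρa : ∀ t, t₁ ≤ t → ρ t ≤ a t / 4)
    (hρ'₀ : ∀ t, t₁ ≤ t → ρ' t ≤ 0) (hρ'a : ∀ t, t₁ ≤ t → -ρ' t ≤ a t * ρ t)
    (hρb : ∀ t, t₁ ≤ t → 3 * a t * ρ t ≤ b t)
    (hsrc : ∀ t, t₁ ≤ t → -b' t * R ^ 2 - g' t - ρ t * g t ≤ 0)
    (hinit : ∃ i, gap f b g x u i t₁ + 1 / 2 * ‖ρ t₁ • (x t₁ - u) + v t₁‖ ^ 2 ≤ 0)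
    {T : ℝ} (hT : t₁ ≤ T) :
    ∃ i, gap f b g x u i T + 1 / 2 * ‖ρ T • (x T - u) + v T‖ ^ 2 ≤ 0 := by
  set y : ℝ → H := fun t => ρ t • (x t - u) + v t with hy
  set D : ι → ℝ → ℝ := fun i t => gap f b g x u i t + 1 / 2 * ‖y t‖ ^ 2 with hD
  have hx : ContinuousOn x (Set.Icc t₁ T) := h.continuousOn.mono fun t ht => ht₁.trans ht.1
  obtain ⟨K, hK⟩ := h.lipschitz T
  have hK' : LipschitzOnWith K v (Set.Icc t₁ T) := hK.mono (Set.Icc_subset_Icc_left ht₁)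
  have hvc := hK'.continuousOn
  have hbc : ContinuousOn b (Set.Icc t₁ T) :=
    fun t ht => (hb t ht.1).continuousAt.continuousWithinAt
  have hρc : ContinuousOn ρ (Set.Icc t₁ T) :=
    fun t ht => (hρ t ht.1).continuousAt.continuousWithinAt
  have hsub : Set.Icc t₁ T ⊆ Set.Ici t₁ := fun t ht => ht.1
  have hgap : ∀ i, ∀ t ∈ Set.Icc t₁ T,
      HasDerivAt (gap f b g x u i) (gapDeriv f b b' g' x v u i t) t := fun i t ht =>
    h.gap_hasDerivAt hdiff (ht₁.trans ht.1) (hb t ht.1) (hg t ht.1) u i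
  -- the first summand of `y` has continuous derivative, the second is Lipschitz
  have hyder : ∀ t ∈ Set.Icc t₁ T,
      HasDerivAt (fun t => ρ t • (x t - u)) (ρ t • v t + ρ' t • (x t - u)) t := fun t ht =>
    (hρ t ht.1).smul ((h.hasDerivAt t (ht₁.trans ht.1)).sub_const u)
  have hyLip : ∃ L : ℝ≥0, LipschitzOnWith L y (Set.Icc t₁ T) := by
    have hc : ContinuousOn (fun t => ρ t • v t + ρ' t • (x t - u)) (Set.Icc t₁ T) :=
      (hρc.smul hvc).add ((hρ'c.mono hsub).smul (hx.sub continuousOn_const))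
    obtain ⟨C, hC⟩ := isCompact_Icc.exists_bound_of_continuousOn hc
    refine ⟨C.toNNReal + K, LipschitzOnWith.add ?_ hK'⟩
    refine (convex_Icc t₁ T).lipschitzOnWith_of_nnnorm_hasDerivWithin_le
      (fun t ht => (hyder t ht).hasDerivWithinAt) fun t ht => ?_
    rw [← NNReal.coe_le_coe, coe_nnnorm]
    exact (hC t ht).trans (Real.le_coe_toNNReal _)
  obtain ⟨L, hL⟩ := hyLip
  have hDc : ∀ i, ContinuousOn (D i) (Set.Icc t₁ T) := fun i =>
    ContinuousOn.add (fun t ht => (hgap i t ht).continuousAt.continuousWithinAt)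
      ((hL.continuousOn.norm.pow 2).const_mul _)
  have hcomp : IsCompact (⋃ i, {t ∈ Set.Icc t₁ T | D i t ∈ Set.Iic 0}) :=
    isCompact_iUnion fun i =>
      isCompact_Icc.of_isClosed_subset ((hDc i).preimage_isClosed_of_isClosed isClosed_Icc
        isClosed_Iic) fun t ht => ht.1
  -- `s` is the last time at which some component of the energy is nonpositive
  obtain ⟨s, hs, hmax⟩ := hcomp.exists_isGreatest (by
    obtain ⟨i, hi⟩ := hinit
    exact ⟨t₁, Set.mem_iUnion.2 ⟨i, ⟨le_rfl, hT⟩, hi⟩⟩)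
  obtain ⟨i, ⟨hs₁, hsT⟩, hsi⟩ := Set.mem_iUnion.1 hs
  refine ⟨i, le_trans ?_ hsi⟩
  have hsubs : Set.Icc s T ⊆ Set.Icc t₁ T := Set.Icc_subset_Icc_left hs₁
  refine energy_antitone hsT (fun t ht => hgap i t (hsubs ht))
    (h.gapDeriv_continuousOn hgrad (ht₁.trans hs₁) (hbc.mono hsubs)
      (hb'c.mono (hsubs.trans hsub)) (hg'c.mono (hsubs.trans hsub)) u i) (hL.mono hsubs)
    (y' := fun t => ρ' t • (x t - u) + ρ t • v t + w t) ?_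
  filter_upwards [h.ae_deriv, h.ae_descent, h.ae_eq] with t hv hdesc heq ht
  have ht1 : t₁ ≤ t := hs₁.trans ht.1.le
  have ht0 : t₀ ≤ t := ht₁.trans ht1
  refine ⟨?_, ?_⟩
  · refine ((hyder t ⟨ht1, ht.2.le⟩).add (hv ht0)).congr_deriv ?_
    rw [add_comm (ρ t • v t)]
  obtain ⟨G, hG, hw⟩ := heq ht0
  have hposD : ∀ j, 0 < D j t := by
    intro j
    by_contra hcon
    exact absurd (hmax (Set.mem_iUnion.2 ⟨j, ⟨ht1, ht.2.le⟩, not_lt.1 hcon⟩)) (not_le.2 ht.1)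
  set W := ⨅ j, (f j (x t) + b t * ‖x t‖ ^ 2 - (f j u + b t * ‖u‖ ^ 2)) with hW
  have hWle : ∀ j, W ≤ f j (x t) + b t * ‖x t‖ ^ 2 - (f j u + b t * ‖u‖ ^ 2) :=
    fun j => ciInf_le (Set.finite_range _).bddBelow j
  have hpos : g t < W + 1 / 2 * ‖ρ t • (x t - u) + v t‖ ^ 2 := by
    obtain ⟨j, hj⟩ := exists_eq_ciInf_of_finite
      (f := fun j => f j (x t) + b t * ‖x t‖ ^ 2 - (f j u + b t * ‖u‖ ^ 2))
    rw [hW, ← hj]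
    have := hposD j
    simp only [hD, gap, hy] at this
    linarith
  have hnorm : ‖x t - u‖ ^ 2 = 2 * ⟪x t - u, x t⟫_ℝ - ‖x t‖ ^ 2 + ‖u‖ ^ 2 := by
    rw [norm_sub_sq_real, inner_sub_left, real_inner_self_eq_norm_sq, real_inner_comm u]
    ring
  have hGineq : W + b t * ‖x t - u‖ ^ 2 ≤ ⟪x t - u, G⟫_ℝ + 2 * b t * ⟪x t - u, x t⟫_ℝ := by
    -- the inequality holds on a half-space in `G` that contains every gradient
    have hsubset : convexHull ℝ (Set.range fun i => gradient (f i) (x t)) ⊆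
        {G | W + b t * ‖x t - u‖ ^ 2 - 2 * b t * ⟪x t - u, x t⟫_ℝ ≤ ⟪x t - u, G⟫_ℝ} := by
      refine convexHull_min ?_ (convex_halfSpace_ge (innerₛₗ ℝ (x t - u)).isLinear _)
      rintro _ ⟨j, rfl⟩
      have h1 := convex_gradient_ineq (hconv j) (hdiff j) (x t) u
      have h2 := hWle j
      simp only [Set.mem_ofPred_eq]
      rw [hnorm]
      linarith
    have := hsubset hG
    simp only [Set.mem_ofPred_eq] at this
    linarith
  exact energy_derivative_nonpos (hdesc ht0 i) hw hGineq hpos (hρ₀ t ht1) (hρa t ht1)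
    (hρ'₀ t ht1) (hρ'a t ht1) (hρb t ht1) (hb' t ht1) hu (hsrc t ht1)

end EnergyTrajectory

/-- A trajectory solution satisfies `EnergyTrajectory`. By the second-order equation the
acceleration is essentially bounded on compact intervals, hence `x'` is Lipschitz there. -/
lemma energyTrajectory_of_mtrigs {H : Type*} [NormedAddCommGroup H] [InnerProductSpace ℝ H]
    [CompleteSpace H] {ι : Type*} [Fintype ι] {f : ι → H → ℝ}
    (hgrad : ∀ i, Continuous (gradient (f i))) {t₀ α β q p : ℝ} (ht₀ : 0 < t₀) (hα : 0 < α)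
    {x x' x'' : ℝ → H}
    (hx : ∀ t ∈ Set.Ici t₀, HasDerivAt x (x' t) t)
    (hx'c : ContinuousOn x' (Set.Ici t₀))
    (hx''m : StronglyMeasurable x'')
    (hx'int : ∀ t ∈ Set.Ici t₀, x' t = x' t₀ + ∫ s in t₀..t, x'' s)
    (hx'' : ∀ᵐ t ∂(volume.restrict (Set.Ici t₀)), HasDerivAt x' (x'' t) t)
    (hMTRIGS : ∀ᵐ t ∂(volume.restrict (Set.Ici t₀)),
      ((-(α / t ^ q)) • x' t ∈
        (fun g => g + (β / t ^ p) • x t + x'' t) ''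
          (convexHull ℝ (Set.range fun i => gradient (f i) (x t)))) ∧
      (∀ w ∈ (fun g => g + (β / t ^ p) • x t + x'' t) ''
          (convexHull ℝ (Set.range fun i => gradient (f i) (x t))),
        ‖(α / t ^ q) • x' t‖ ≤ ‖w‖)) :
    EnergyTrajectory f (fun t => α / t ^ q) (fun t => β / (2 * t ^ p)) t₀ x x' x'' := by
  rw [ae_restrict_iff' measurableSet_Ici] at hx'' hMTRIGS
  have h2b : ∀ t, 2 * (β / (2 * t ^ p)) = β / t ^ p := fun t => by
    rw [← mul_div_assoc, mul_div_mul_left _ _ two_ne_zero]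
  have hfacts : ∀ᵐ t, t₀ ≤ t → (∀ i, ⟪gradient (f i) (x t), x' t⟫_ℝ
        + 2 * (β / (2 * t ^ p)) * ⟪x t, x' t⟫_ℝ + ⟪x' t, x'' t⟫_ℝ ≤ -(α / t ^ q) * ‖x' t‖ ^ 2) ∧
      ∃ G ∈ convexHull ℝ (Set.range fun i => gradient (f i) (x t)),
        x'' t = -((α / t ^ q) • x' t) - (2 * (β / (2 * t ^ p))) • x t - G := by
    filter_upwards [hMTRIGS] with t ht htt
    have hpos : 0 < α / t ^ q := div_pos hα (Real.rpow_pos_of_pos (ht₀.trans_le htt) q)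
    obtain ⟨h1, h2⟩ := steepest_descent_facts hpos (ht htt).1 (ht htt).2
    rw [h2b]
    exact ⟨fun i => h1 _ ⟨i, rfl⟩, h2⟩
  refine ⟨hx, fun T => ?_, hx'', hfacts.mono fun t h ht => (h ht).1,
    hfacts.mono fun t h ht => (h ht).2⟩
  have hsub : Set.Icc t₀ T ⊆ Set.Ici t₀ := fun t ht => ht.1
  have hxc : ContinuousOn x (Set.Icc t₀ T) :=
    fun t ht => (hx t ht.1).continuousAt.continuousWithinAt
  have hne : ∀ t ∈ Set.Icc t₀ T, t ≠ 0 := fun t ht => (ht₀.trans_le ht.1).ne'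
  have hrp : ∀ e : ℝ, ContinuousOn (fun t : ℝ => t ^ e) (Set.Icc t₀ T) := fun e =>
    continuousOn_id.rpow_const fun t ht => Or.inl (hne t ht)
  have hrp0 : ∀ e : ℝ, ∀ t ∈ Set.Icc t₀ T, t ^ e ≠ 0 := fun e t ht =>
    (Real.rpow_pos_of_pos (ht₀.trans_le ht.1) e).ne'
  have hcont1 : ContinuousOn (fun t => -((α / t ^ q) • x' t) - (2 * (β / (2 * t ^ p))) • x t)
      (Set.Icc t₀ T) := by
    simp only [h2b]
    exact ((continuousOn_const.div (hrp q) (hrp0 q)).smul (hx'c.mono hsub)).neg.sub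
      ((continuousOn_const.div (hrp p) (hrp0 p)).smul hxc)
  have hcont2 : ContinuousOn (fun t => ∑ i, ‖gradient (f i) (x t)‖) (Set.Icc t₀ T) :=
    continuousOn_finsetSum _ fun i _ => ((hgrad i).comp_continuousOn hxc).norm
  obtain ⟨C₁, hC₁⟩ := isCompact_Icc.exists_bound_of_continuousOn hcont1
  obtain ⟨C₂, hC₂⟩ := isCompact_Icc.exists_bound_of_continuousOn hcont2
  refine ⟨(C₁ + C₂).toNNReal, velocity_lipschitz hx''m hx'int ?_⟩
  filter_upwards [hfacts] with t h ht
  obtain ⟨-, G, hG, hw⟩ := h ht.1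
  have hball : convexHull ℝ (Set.range fun i => gradient (f i) (x t)) ⊆ Metric.closedBall 0 C₂ := by
    refine convexHull_min ?_ (convex_closedBall _ _)
    rintro _ ⟨i, rfl⟩
    rw [mem_closedBall_zero_iff]
    refine le_trans ?_ ((Real.le_norm_self _).trans (hC₂ t ht))
    exact Finset.single_le_sum (f := fun i => ‖gradient (f i) (x t)‖)
      (fun i _ => norm_nonneg _) (Finset.mem_univ i)
  rw [hw]
  exact (norm_sub_le _ _).trans (add_le_add (hC₁ t ht) (mem_closedBall_zero_iff.1 (hball hG)))

/-! ### Rates -/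

lemma le_sqrt_mul_rpow {N K t e : ℝ} (ht : 0 < t) (h : N ^ 2 ≤ K * t ^ e) :
    N ≤ √K * t ^ (e / 2) := by
  refine (Real.le_sqrt_of_sq_le h).trans_eq ?_
  rw [mul_comm, Real.sqrt_mul (Real.rpow_nonneg ht.le e), mul_comm, Real.sqrt_eq_rpow (t ^ e),
    ← Real.rpow_mul ht.le]
  ring_nf

/-- The unregularized merit of `x` exceeds the regularized one by at most `b * R²`, if the
unregularized problem has a minimizer `s` in the ball of radius `R`. -/
lemma merit_le_regularized_merit {H : Type*} [NormedAddCommGroup H] {ι : Type*} [Finite ι] [Nonempty ι]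
    {f : ι → H → ℝ} {b R : ℝ} (hb : 0 ≤ b) {x z s : H} (hs : ‖s‖ ≤ R)
    (hmin : ∀ y : H, (⨆ i, (f i s - f i x)) ≤ ⨆ i, (f i y - f i x))
    (hz : (⨆ i, (f i z - f i x)) + b * ‖z‖ ^ 2 ≤ (⨆ i, (f i s - f i x)) + b * ‖s‖ ^ 2) (y : H) :
    (⨅ i, (f i x - f i y)) ≤
      (⨅ i, ((f i x + b * ‖x‖ ^ 2) - (f i z + b * ‖z‖ ^ 2))) + b * R ^ 2 := by
  obtain ⟨j, hj⟩ := exists_eq_ciSup_of_finite (f := fun i => f i y - f i x)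
  obtain ⟨i, hi⟩ := exists_eq_ciInf_of_finite
    (f := fun i => (f i x + b * ‖x‖ ^ 2) - (f i z + b * ‖z‖ ^ 2))
  rw [← hi]
  have h1 : (⨅ i, (f i x - f i y)) ≤ f j x - f j y :=
    ciInf_le (f := fun i => f i x - f i y) (Set.finite_range _).bddBelow j
  have h2 := hmin y
  rw [← hj] at h2
  have h3 : f i z - f i x ≤ ⨆ i, (f i z - f i x) :=
    le_ciSup (f := fun i => f i z - f i x) (Set.finite_range _).bddAbove i
  have h4 : b * ‖s‖ ^ 2 ≤ b * R ^ 2 :=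
    mul_le_mul_of_nonneg_left (pow_le_pow_left₀ (norm_nonneg s) hs 2) hb
  have h5 := mul_nonneg hb (sq_nonneg ‖x‖)
  linarith

/-- A bound on the energy at one time that is uniform in the centre `u` over a ball. -/
lemma initial_energy_bound {H : Type*} [NormedAddCommGroup H] [InnerProductSpace ℝ H]
    [CompleteSpace H] {f : H → ℝ} (hc : ConvexOn ℝ Set.univ f) (hd : Differentiable ℝ f)
    {b ρ R : ℝ} (hb : 0 ≤ b) (hρ : 0 ≤ ρ) (x v : H) {u : H} (hu : ‖u‖ ≤ R) :
    f x + b * ‖x‖ ^ 2 - (f u + b * ‖u‖ ^ 2) + 1 / 2 * ‖ρ • (x - u) + v‖ ^ 2 ≤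
      f x + b * ‖x‖ ^ 2 - f 0 + R * ‖gradient f 0‖ + 1 / 2 * (ρ * (‖x‖ + R) + ‖v‖) ^ 2 := by
  have h1 := convex_gradient_ineq hc hd 0 u
  have h2 : ⟪0 - u, gradient f 0⟫_ℝ ≤ R * ‖gradient f 0‖ := by
    refine (real_inner_le_norm _ _).trans ?_
    rw [zero_sub, norm_neg]
    exact mul_le_mul_of_nonneg_right hu (norm_nonneg _)
  have h3 : ‖ρ • (x - u) + v‖ ≤ ρ * (‖x‖ + R) + ‖v‖ := by
    refine (norm_add_le _ _).trans (add_le_add_left ?_ _)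
    rw [norm_smul, Real.norm_of_nonneg hρ]
    exact mul_le_mul_of_nonneg_left ((norm_sub_le _ _).trans (add_le_add_right hu _)) hρ
  have h4 := pow_le_pow_left₀ (norm_nonneg _) h3 2
  have h5 := mul_nonneg hb (sq_nonneg ‖u‖)
  linarith

/-- With `ρ t = κ t^(-r)` the requirements of `fixed_center_decay` hold for large `t`: `q ≤ r` gives
`ρ ≤ a / 4`, `p - q ≤ r` gives `3 a ρ ≤ b`, and `q < 1` gives `-ρ' ≤ a ρ`. Because `r < 1`,
`g t = C t^(r - (p + 1))` satisfies `g' + ρ g ≥ (κ / 2) C t^(-p - 1)`, so it dominates the source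
`-b' R²` once `C` is large, and `t₁` does not depend on `C`. -/
lemma exists_scaling {α β q p r R : ℝ} (t₀ : ℝ) (hα : 0 < α) (hβ : 0 < β) (hq₁ : q < 1)
    (hq₀ : 0 < q) (hqr : q ≤ r) (hpr : p - q ≤ r) (hr : r < 1) :
    ∃ κ > 0, ∃ t₁, t₀ ≤ t₁ ∧ 1 ≤ t₁ ∧ ∀ t, t₁ ≤ t →
      κ * t ^ (-r) ≤ α / t ^ q / 4 ∧
      κ * (r * t ^ (-r - 1)) ≤ α / t ^ q * (κ * t ^ (-r)) ∧
      3 * (α / t ^ q) * (κ * t ^ (-r)) ≤ β / (2 * t ^ p) ∧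
      ∀ C, p * β * R ^ 2 / κ ≤ C → 0 ≤ C →
        p * β / 2 * t ^ (-p - 1) * R ^ 2 - C * ((r - (p + 1)) * t ^ (r - (p + 1) - 1))
          - κ * t ^ (-r) * (C * t ^ (r - (p + 1))) ≤ 0 := by
  set κ := min (α / 4) (β / (6 * α)) with hκ
  have hκ0 : 0 < κ := by positivity
  have hr0 : 0 < r := hq₀.trans_le hqr
  have hlim : ∀ e : ℝ, e < 1 → Tendsto (fun t : ℝ => t ^ (e - 1)) atTop (𝓝 0) := fun e he => by
    simpa using tendsto_rpow_neg_atTop (y := 1 - e) (by linarith)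
  have ev1 : ∀ᶠ t : ℝ in atTop, t ^ (q - 1) < α := (hlim q hq₁).eventually_lt_const hα
  have ev2 : ∀ᶠ t : ℝ in atTop, (p + 1 - r) * t ^ (r - 1) < κ / 2 := by
    have := (hlim r hr).const_mul (p + 1 - r)
    rw [mul_zero] at this
    exact this.eventually_lt_const (by positivity)
  obtain ⟨t₂, ht₂⟩ := eventually_atTop.1 (ev1.and ev2)
  refine ⟨κ, hκ0, max (max t₀ 1) t₂, (le_max_left _ _).trans (le_max_left _ _),
    (le_max_right _ _).trans (le_max_left _ _), fun t ht => ?_⟩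
  have ht1 : 1 ≤ t := ((le_max_right _ _).trans (le_max_left _ _)).trans ht
  have ht0 : 0 < t := by linarith
  obtain ⟨e1, e2⟩ := ht₂ t ((le_max_right _ _).trans ht)
  have hdq : α / t ^ q = α * t ^ (-q) := by rw [Real.rpow_neg ht0.le, div_eq_mul_inv]
  have hrq : t ^ (-r) ≤ t ^ (-q) := Real.rpow_le_rpow_of_exponent_le ht1 (by linarith)
  have hq' : 0 < t ^ (-q) := Real.rpow_pos_of_pos ht0 _
  have hr' : 0 < t ^ (-r) := Real.rpow_pos_of_pos ht0 _
  rw [hdq]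
  refine ⟨?_, ?_, ?_, fun C hC hC0 => ?_⟩
  · have : κ * t ^ (-r) ≤ α / 4 * t ^ (-q) :=
      mul_le_mul (min_le_left _ _) hrq hr'.le (by positivity)
    linarith
  · have h1 : t ^ (-r - 1) = t ^ (-r) * (t ^ (-q) * t ^ (q - 1)) := by
      rw [← Real.rpow_add ht0, ← Real.rpow_add ht0]
      ring_nf
    have h2 : r * t ^ (q - 1) ≤ α := by
      nlinarith [Real.rpow_pos_of_pos ht0 (q - 1)]
    rw [h1]
    have := mul_le_mul_of_nonneg_left h2 (by positivity : 0 ≤ κ * t ^ (-r) * t ^ (-q))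
    linarith
  · have h1 : t ^ (-q) * t ^ (-r) ≤ t ^ (-p) := by
      rw [← Real.rpow_add ht0]
      exact Real.rpow_le_rpow_of_exponent_le ht1 (by linarith)
    have h2 : 3 * α * κ ≤ β / 2 := by
      have : κ ≤ β / (6 * α) := min_le_right _ _
      rw [le_div_iff₀ (by positivity)] at this
      linarith
    have h3 : β / (2 * t ^ p) = β / 2 * t ^ (-p) := by
      rw [Real.rpow_neg ht0.le]; field_simp
    rw [h3]
    calc 3 * (α * t ^ (-q)) * (κ * t ^ (-r)) = 3 * α * κ * (t ^ (-q) * t ^ (-r)) := by ring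
      _ ≤ _ := mul_le_mul h2 h1 (by positivity) (by positivity)
  · have h1 : t ^ (r - (p + 1) - 1) = t ^ (-p - 1) * t ^ (r - 1) := by
      rw [← Real.rpow_add ht0]; ring_nf
    have h2 : t ^ (-r) * t ^ (r - (p + 1)) = t ^ (-p - 1) := by
      rw [← Real.rpow_add ht0]; ring_nf
    have h3 : p * β * R ^ 2 ≤ C * κ := by rwa [div_le_iff₀ hκ0] at hC
    have h4 : C * ((p + 1 - r) * t ^ (r - 1)) ≤ C * (κ / 2) :=
      mul_le_mul_of_nonneg_left e2.le hC0
    have h5 : 0 < t ^ (-p - 1) := Real.rpow_pos_of_pos ht0 _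
    have h6 : κ * t ^ (-r) * (C * t ^ (r - (p + 1))) = κ * C * t ^ (-p - 1) := by
      rw [← h2]; ring
    rw [h1, h6]
    have := mul_nonpos_of_nonneg_of_nonpos h5.le
      (by linarith : p * β / 2 * R ^ 2 + C * ((p + 1 - r) * t ^ (r - 1)) - κ * C ≤ 0)
    linarith

/-- Recovers the velocity from the energy: the position part of the energy vector
`ρ • d + v` is controlled by the gap through strong convexity, because `12 * ρ² ≤ b`. -/
lemma velocity_sq_le {H : Type*} [NormedAddCommGroup H] [NormedSpace ℝ H]
    {d v : H} {a b ρ W E : ℝ} (hb : 0 < b) (hρ : 0 < ρ) (hρa : ρ ≤ a / 4) (hρb : 3 * a * ρ ≤ b)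
    (hW : b / 2 * ‖d‖ ^ 2 ≤ W) (hE : W + 1 / 2 * ‖ρ • d + v‖ ^ 2 ≤ E) : ‖v‖ ^ 2 ≤ 4 * E := by
  have h1 : 12 * ρ ^ 2 ≤ b := by nlinarith
  have h2 : ‖v‖ ≤ ‖ρ • d + v‖ + ρ * ‖d‖ := by
    have := norm_sub_le (ρ • d + v) (ρ • d)
    rwa [add_sub_cancel_left, norm_smul, Real.norm_of_nonneg hρ.le] at this
  have h3 := pow_le_pow_left₀ (norm_nonneg v) h2 2
  have h4 : ‖v‖ ^ 2 ≤ 2 * ‖ρ • d + v‖ ^ 2 + 2 * (ρ ^ 2 * ‖d‖ ^ 2) := by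
    nlinarith [sq_nonneg (‖ρ • d + v‖ - ρ * ‖d‖)]
  have h5 := mul_le_mul_of_nonneg_right h1 (sq_nonneg ‖d‖)
  have h6 := mul_nonneg hb.le (sq_nonneg ‖d‖)
  linarith

/-! ### Convergence rates for trajectory solutions -/

/-- For `q ∈ (0,1)`, `p ∈ (0,2]` with `p < q + 1`, a trajectory solution `x`
of (MTRIGS), under (A3) and nonemptiness of `S(F(x(t)))`, for every `r ∈ [max(q, p−q), 1)`, as
`t → ∞`: (a) `min_i (f_{t,i}(x(t)) − f_{t,i}(z(t))) = O(t^{r−(p+1)})`;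
(b) `φ(x(t)) ≤ C t^{−p}` eventually; (c) `‖x(t) − z(t)‖ = O(t^{(r−1)/2})`;
(d) `‖ẋ(t)‖ = O(t^{(r−(p+1))/2})`. -/
theorem stmt_15
    {H : Type*} [NormedAddCommGroup H] [InnerProductSpace ℝ H] [CompleteSpace H]
    {m : ℕ} (hm : 0 < m) (f : Fin m → H → ℝ)
    (hconv : ∀ i, ConvexOn ℝ Set.univ (f i))
    (hdiff : ∀ i, Differentiable ℝ (f i))
    (hlip : ∀ i, ∃ L : ℝ≥0, LipschitzWith L (gradient (f i)))
    (t₀ α β q p : ℝ) (ht₀ : 0 < t₀) (hα : 0 < α) (hβ : 0 < β)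
    (hq : q ∈ Set.Ioo (0:ℝ) 1) (hp : p ∈ Set.Ioc (0:ℝ) 2) (hpq : p < q + 1)
    (x x' x'' : ℝ → H)
    (hx : ∀ t ∈ Set.Ici t₀, HasDerivAt x (x' t) t)
    (hx'c : ContinuousOn x' (Set.Ici t₀))
    (hx''m : StronglyMeasurable x'')
    (hx'int : ∀ t ∈ Set.Ici t₀, x' t = x' t₀ + ∫ s in t₀..t, x'' s)
    (hx'' : ∀ᵐ t ∂(volume.restrict (Set.Ici t₀)), HasDerivAt x' (x'' t) t)
    (hMTRIGS : ∀ᵐ t ∂(volume.restrict (Set.Ici t₀)),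
      ((-(α / t ^ q)) • x' t ∈
        (fun g => g + (β / t ^ p) • x t + x'' t) ''
          (convexHull ℝ (Set.range fun i => gradient (f i) (x t)))) ∧
      (∀ w ∈ (fun g => g + (β / t ^ p) • x t + x'' t) ''
          (convexHull ℝ (Set.range fun i => gradient (f i) (x t))),
        ‖(α / t ^ q) • x' t‖ ≤ ‖w‖))
    (hS : ∀ t, t₀ ≤ t →
      ∃ u : H, ∀ y : H, (⨆ i, (f i u - f i (x t))) ≤ ⨆ i, (f i y - f i (x t)))
    (hA3a : ∀ w : H,
      (∀ i, f i w ≤ f i (x t₀)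
        + (β / (2 * t₀ ^ p) * ‖x t₀‖ ^ 2 + (1/2) * ‖x' t₀‖ ^ 2)) →
      ∃ u : H, (∀ i, f i u ≤ f i w) ∧ ¬ ∃ y : H, ∀ i, f i y < f i u)
    (hA3b : ∃ R : ℝ, 0 ≤ R ∧ ∀ y : H,
      ((∀ i, f i y ≤ f i (x t₀)
          + (β / (2 * t₀ ^ p) * ‖x t₀‖ ^ 2 + (1/2) * ‖x' t₀‖ ^ 2)) ∧
        ¬ ∃ u : H, ∀ i, f i u < f i y) →
      ∀ ε : ℝ, 0 < ε → ∃ z' : H, (∀ i, f i z' = f i y) ∧ ‖z'‖ ≤ R + ε)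
    (z : ℝ → H)
    (hz : ∀ t, t₀ ≤ t → ∀ u : H,
      (⨆ i, (f i (z t) - f i (x t))) + β / (2 * t ^ p) * ‖z t‖ ^ 2 ≤
        (⨆ i, (f i u - f i (x t))) + β / (2 * t ^ p) * ‖u‖ ^ 2)
    (φ : H → EReal)
    (hφ : ∀ y : H, φ y = ⨆ w : H, (((⨅ i, (f i y - f i w)) : ℝ) : EReal)) :
    ∀ r : ℝ, max q (p - q) ≤ r → r < 1 →
    (∃ C : ℝ, 0 ≤ C ∧ ∃ T : ℝ, t₀ ≤ T ∧ ∀ t, T ≤ t →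
      |⨅ i, ((f i (x t) + β / (2 * t ^ p) * ‖x t‖ ^ 2)
        - (f i (z t) + β / (2 * t ^ p) * ‖z t‖ ^ 2))| ≤ C * t ^ (r - (p + 1))) ∧
    (∃ C : ℝ, 0 ≤ C ∧ ∃ T : ℝ, t₀ ≤ T ∧ ∀ t, T ≤ t →
      φ (x t) ≤ ((C * t ^ (-p) : ℝ) : EReal)) ∧
    (∃ C : ℝ, 0 ≤ C ∧ ∃ T : ℝ, t₀ ≤ T ∧ ∀ t, T ≤ t →
      ‖x t - z t‖ ≤ C * t ^ ((r - 1) / 2)) ∧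
    (∃ C : ℝ, 0 ≤ C ∧ ∃ T : ℝ, t₀ ≤ T ∧ ∀ t, T ≤ t →
      ‖x' t‖ ≤ C * t ^ ((r - (p + 1)) / 2)) := by
  intro r hr hr1
  obtain ⟨hq0, hq1⟩ := hq
  have hp0 : 0 < p := hp.1
  have hqr : q ≤ r := (le_max_left _ _).trans hr
  have hpr : p - q ≤ r := (le_max_right _ _).trans hr
  have hr0 : 0 < r := hq0.trans_le hqr
  have : Nonempty (Fin m) := ⟨⟨0, hm⟩⟩
  have hgrad : ∀ i, Continuous (gradient (f i)) := fun i => by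
    obtain ⟨L, hL⟩ := hlip i
    exact hL.continuous
  have htraj := energyTrajectory_of_mtrigs hgrad ht₀ hα hx hx'c hx''m hx'int hx'' hMTRIGS
  obtain ⟨R₀, hR₀, hR₀'⟩ := hA3b
  -- the constant `ε` of the assumption is fixed once and for all to `1`
  set R := R₀ + 1 with hR
  have hb0 : ∀ t, t₀ ≤ t → 0 < β / (2 * t ^ p) := fun t ht => by
    have := Real.rpow_pos_of_pos (ht₀.trans_le ht) p
    positivity
  have hbd : ∀ t, t₀ ≤ t →
      HasDerivAt (fun t : ℝ => β / (2 * t ^ p)) (-(p * β / 2 * t ^ (-p - 1))) t := by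
    intro t ht
    have htp := ht₀.trans_le ht
    have h1 := (Real.hasDerivAt_rpow_const (p := -p) (Or.inl htp.ne')).const_mul (β / 2)
    refine (h1.congr_of_eventuallyEq ?_).congr_deriv (by ring)
    filter_upwards [lt_mem_nhds htp] with s hs
    rw [Real.rpow_neg hs.le]
    have := (Real.rpow_pos_of_pos hs p).ne'
    field_simp
  have hrpc : ∀ e : ℝ, ContinuousOn (fun t : ℝ => t ^ e) (Set.Ici t₀) := fun e =>
    continuousOn_id.rpow_const fun t ht => Or.inl (ht₀.trans_le ht).ne'
  have hb'c : ContinuousOn (fun t : ℝ => -(p * β / 2 * t ^ (-p - 1))) (Set.Ici t₀) :=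
    ((hrpc _).const_mul _).neg
  have hb' : ∀ t, t₀ ≤ t → -(p * β / 2 * t ^ (-p - 1)) ≤ 0 := fun t ht => by
    have := Real.rpow_pos_of_pos (ht₀.trans_le ht) (-p - 1)
    have : 0 ≤ p * β / 2 * t ^ (-p - 1) := by positivity
    linarith
  have hlevel : ∀ t, t₀ ≤ t → ∀ i, f i (x t) ≤ f i (x t₀)
      + (β / (2 * t₀ ^ p) * ‖x t₀‖ ^ 2 + 1 / 2 * ‖x' t₀‖ ^ 2) := fun t ht i =>
    htraj.dissipation hdiff hgrad
      (fun s hs => div_nonneg hα.le (Real.rpow_pos_of_pos (ht₀.trans_le hs) q).le)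
      hbd hb'c (fun s hs => (hb0 s hs).le) hb' ht i
  have hbound : ∀ t, t₀ ≤ t → ‖z t‖ ≤ R ∧ ∃ s : H, ‖s‖ ≤ R ∧
      ∀ y : H, (⨆ i, (f i s - f i (x t))) ≤ ⨆ i, (f i y - f i (x t)) := fun t ht =>
    regularized_minimizer_bound (hb0 t ht) (hlevel t ht) (hS t ht)
      (fun y hy => hR₀' y hy 1 one_pos) (hz t ht)
  obtain ⟨κ, hκ, t₁, ht₁, ht₁1, hscale⟩ :=
    exists_scaling (R := R) t₀ hα hβ hq1 hq0 hqr hpr hr1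
  have hpos : ∀ t, t₁ ≤ t → 0 < t := fun t ht => ht₀.trans_le (ht₁.trans ht)
  -- `M` bounds the energy at time `t₁` for every centre in the ball of radius `R`
  set i₀ : Fin m := ⟨0, hm⟩
  set M := f i₀ (x t₁) + β / (2 * t₁ ^ p) * ‖x t₁‖ ^ 2 - f i₀ 0 + R * ‖gradient (f i₀) 0‖
    + 1 / 2 * (κ * t₁ ^ (-r) * (‖x t₁‖ + R) + ‖x' t₁‖) ^ 2 with hM
  set e := r - (p + 1) with he
  have hE₁ : 0 < t₁ ^ e := Real.rpow_pos_of_pos (hpos t₁ le_rfl) e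
  set C := max (p * β * R ^ 2 / κ) (M / t₁ ^ e) with hC
  have hC0 : 0 ≤ C := le_trans (by positivity) (le_max_left _ _)
  have hMC : M ≤ C * t₁ ^ e := (div_le_iff₀ hE₁).1 (le_max_right _ _)
  have hmono : Set.Ici t₁ ⊆ Set.Ici t₀ := Set.Ici_subset_Ici.2 ht₁
  -- the centre `z T` is frozen on `[t₁, T]`, hence no regularity of `z` is needed
  have hdecay : ∀ T, t₁ ≤ T →
      (⨅ i, ((f i (x T) + β / (2 * T ^ p) * ‖x T‖ ^ 2)
        - (f i (z T) + β / (2 * T ^ p) * ‖z T‖ ^ 2)))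
        + 1 / 2 * ‖(κ * T ^ (-r)) • (x T - z T) + x' T‖ ^ 2 ≤ C * T ^ e := by
    intro T hT
    have hzR := (hbound T (ht₁.trans hT)).1
    obtain ⟨i, hi⟩ := htraj.fixed_center_decay (R := R) (u := z T) (t₁ := t₁) (T := T)
      (ρ := fun t => κ * t ^ (-r)) (ρ' := fun t => κ * (-r * t ^ (-r - 1)))
      (g := fun t => C * t ^ e) (g' := fun t => C * (e * t ^ (e - 1)))
      hconv hdiff hgrad ht₁ hzR
      (fun t ht => hbd t (ht₁.trans ht)) (hb'c.mono hmono)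
      (fun t ht => (Real.hasDerivAt_rpow_const (Or.inl (hpos t ht).ne')).const_mul κ)
      ((((hrpc _).const_mul _).const_mul _).mono hmono)
      (fun t ht => (Real.hasDerivAt_rpow_const (Or.inl (hpos t ht).ne')).const_mul C)
      ((((hrpc _).const_mul _).const_mul _).mono hmono)
      (fun t ht => hb' t (ht₁.trans ht))
      (fun t ht => mul_pos hκ (Real.rpow_pos_of_pos (hpos t ht) _))
      (fun t ht => (hscale t ht).1)
      (fun t ht => by
        have := mul_nonneg hκ.le (mul_nonneg hr0.le (Real.rpow_pos_of_pos (hpos t ht) (-r - 1)).le)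
        linarith)
      (fun t ht => by
        have := (hscale t ht).2.1
        linarith)
      (fun t ht => (hscale t ht).2.2.1)
      (fun t ht => by
        have := (hscale t ht).2.2.2 C (le_max_left _ _) hC0
        linarith)
      (by
        refine ⟨i₀, ?_⟩
        have := initial_energy_bound (hconv i₀) (hdiff i₀) (hb0 t₁ ht₁).le
          (mul_nonneg hκ.le (Real.rpow_pos_of_pos (hpos t₁ le_rfl) (-r)).le) (x t₁) (x' t₁) hzR
        simp only [EnergyTrajectory.gap]
        linarith) hT
    simp only [EnergyTrajectory.gap] at hi
    have := ciInf_le (f := fun i => (f i (x T) + β / (2 * T ^ p) * ‖x T‖ ^ 2)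
        - (f i (z T) + β / (2 * T ^ p) * ‖z T‖ ^ 2)) (Set.finite_range _).bddBelow i
    linarith
  have hstrong : ∀ T, t₁ ≤ T → β / (2 * T ^ p) / 2 * ‖x T - z T‖ ^ 2 ≤
      ⨅ i, ((f i (x T) + β / (2 * T ^ p) * ‖x T‖ ^ 2)
        - (f i (z T) + β / (2 * T ^ p) * ‖z T‖ ^ 2)) := fun T hT =>
    regularized_gap_strong hconv (hz T (ht₁.trans hT))
  have hW0 : ∀ T, t₁ ≤ T → 0 ≤ ⨅ i, ((f i (x T) + β / (2 * T ^ p) * ‖x T‖ ^ 2)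
        - (f i (z T) + β / (2 * T ^ p) * ‖z T‖ ^ 2)) := fun T hT => by
    have := hb0 T (ht₁.trans hT)
    exact le_trans (by positivity) (hstrong T hT)
  have hbT : ∀ T, t₁ ≤ T → β / (2 * T ^ p) = β / 2 * T ^ (-p) := fun T hT => by
    rw [Real.rpow_neg (hpos T hT).le]
    have := (Real.rpow_pos_of_pos (hpos T hT) p).ne'
    field_simp
  refine ⟨⟨C, hC0, t₁, ht₁, fun T hT => ?_⟩,
    ⟨C + β / 2 * R ^ 2, by positivity, t₁, ht₁, fun T hT => ?_⟩,
    ⟨√(4 * C / β), Real.sqrt_nonneg _, t₁, ht₁, fun T hT => ?_⟩,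
    ⟨√(4 * C), Real.sqrt_nonneg _, t₁, ht₁, fun T hT => ?_⟩⟩
  · rw [abs_of_nonneg (hW0 T hT)]
    linarith [hdecay T hT, sq_nonneg ‖(κ * T ^ (-r)) • (x T - z T) + x' T‖]
  · rw [hφ]
    refine iSup_le fun y => EReal.coe_le_coe_iff.2 ?_
    obtain ⟨-, s, hsR, hsmin⟩ := hbound T (ht₁.trans hT)
    refine (merit_le_regularized_merit (hb0 T (ht₁.trans hT)).le hsR hsmin
      (hz T (ht₁.trans hT) s) y).trans ?_
    have h1 : T ^ e ≤ T ^ (-p) :=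
      Real.rpow_le_rpow_of_exponent_le (ht₁1.trans hT) (by linarith)
    have h2 := mul_le_mul_of_nonneg_left h1 hC0
    have h3 := hdecay T hT
    have h4 := sq_nonneg ‖(κ * T ^ (-r)) • (x T - z T) + x' T‖
    have h5 : β / (2 * T ^ p) * R ^ 2 = β / 2 * R ^ 2 * T ^ (-p) := by rw [hbT T hT]; ring
    rw [h5]
    linarith
  · refine le_sqrt_mul_rpow (hpos T hT) ?_
    have h1 : β / (2 * T ^ p) / 2 * ‖x T - z T‖ ^ 2 ≤ C * T ^ e := by
      linarith [hdecay T hT, hstrong T hT,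
        sq_nonneg ‖(κ * T ^ (-r)) • (x T - z T) + x' T‖]
    have hTp := Real.rpow_pos_of_pos (hpos T hT) (-p)
    have h2 : T ^ e = T ^ (-p) * T ^ (r - 1) := by
      rw [← Real.rpow_add (hpos T hT), he]
      ring_nf
    rw [hbT T hT, h2] at h1
    have h3 : T ^ (-p) * (β / 4 * ‖x T - z T‖ ^ 2) ≤ T ^ (-p) * (C * T ^ (r - 1)) := by linarith
    have h4 := le_of_mul_le_mul_left h3 hTp
    rw [div_mul_eq_mul_div, le_div_iff₀ hβ]
    linarith
  · refine le_sqrt_mul_rpow (hpos T hT) ?_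
    rw [mul_assoc]
    exact velocity_sq_le (hb0 T (ht₁.trans hT))
      (mul_pos hκ (Real.rpow_pos_of_pos (hpos T hT) _)) (hscale T hT).1 (hscale T hT).2.2.1
      (hstrong T hT) (hdecay T hT)
end
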